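/- arXiv:math/0602337 — 3 statements merged into one kernel-verified Lean document; each statement's English description precedes it below -/
import Mathlib

section
/- Let u(y,t) = ∫_{ℝⁿ} K(y,z,t) u₀(z) dz, where K is the Euclidean heat kernel on ℝⁿ and u₀ : ℝⁿ → ℝ is continuous, compactly supported, nonnegative, and not identically zero. Then for every y ∈ ℝⁿ and t > 0 one has the Li–Yau inequality Δ log u(y,t) + n/(2t) ≥ 0; equivalently, Δu - ‖∇u‖²/u + (n/(2t)) u ≥ 0. -/
open Real MeasureTheory Filter Set

/-- The Euclidean heat kernel on ℝⁿ. -/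
noncomputable def heatK (n : ℕ) (x y : EuclideanSpace ℝ (Fin n)) (t : ℝ) : ℝ :=
  (4 * π * t) ^ (-(n : ℝ) / 2) * Real.exp (-‖x - y‖ ^ 2 / (4 * t))

/-- `i`-th partial derivative of `f : ℝⁿ → ℝ`. -/
noncomputable def pdv {n : ℕ} (i : Fin n) (f : EuclideanSpace ℝ (Fin n) → ℝ)
    (y : EuclideanSpace ℝ (Fin n)) : ℝ :=
  fderiv ℝ f y (EuclideanSpace.single i 1)

/-- Euclidean Laplacian (trace of the Hessian) of `f : ℝⁿ → ℝ`. -/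
noncomputable def lap {n : ℕ} (f : EuclideanSpace ℝ (Fin n) → ℝ)
    (y : EuclideanSpace ℝ (Fin n)) : ℝ :=
  ∑ i, pdv i (pdv i f) y

theorem aux_diff {n : ℕ} (φ : EuclideanSpace ℝ (Fin n) → ℝ) (hc : Continuous φ)
    (hsupp : HasCompactSupport φ)
    (g : EuclideanSpace ℝ (Fin n) → EuclideanSpace ℝ (Fin n) → ℝ)
    (G : EuclideanSpace ℝ (Fin n) → EuclideanSpace ℝ (Fin n) → (EuclideanSpace ℝ (Fin n) →L[ℝ] ℝ))
    (hg : Continuous (Function.uncurry g)) (hG : Continuous (Function.uncurry G))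
    (hd : ∀ y z, HasFDerivAt (fun y => g y z) (G y z) y) (y : EuclideanSpace ℝ (Fin n)) :
    DifferentiableAt ℝ (fun y => ∫ z, g y z * φ z) y ∧
    ∀ v, fderiv ℝ (fun y => ∫ z, g y z * φ z) y v = ∫ z, G y z v * φ z := by
  have hgy : ∀ y, Continuous (g y) := fun y => hg.comp (Continuous.prodMk_right y)
  have hGy : ∀ y, Continuous (G y) := fun y => hG.comp (Continuous.prodMk_right y)
  have hint : Integrable (fun z => φ z • G y z) :=
    (hc.smul (hGy y)).integrable_of_hasCompactSupport hsupp.smul_right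
  obtain ⟨M, hM⟩ := ((isCompact_closedBall y 1).prod hsupp).exists_bound_of_continuousOn
    hG.continuousOn
  have key : HasFDerivAt (fun y => ∫ z, g y z * φ z) (∫ z, φ z • G y z) y := by
    refine hasFDerivAt_integral_of_dominated_of_fderiv_le (F := fun y z => g y z * φ z)
      (F' := fun y z => φ z • G y z)
      (bound := fun z => M * ‖φ z‖) (Metric.closedBall_mem_nhds y one_pos) ?_ ?_ ?_ ?_ ?_ ?_
    · exact Eventually.of_forall fun x => ((hgy x).mul hc).aestronglyMeasurable
    · exact ((hgy y).mul hc).integrable_of_hasCompactSupport hsupp.mul_left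
    · exact hint.aestronglyMeasurable
    · refine Eventually.of_forall fun z x hx => ?_
      by_cases hz : z ∈ tsupport φ
      · have := hM (x, z) ⟨hx, hz⟩
        rw [norm_smul, mul_comm]
        exact mul_le_mul_of_nonneg_right this (norm_nonneg _)
      · simp [image_eq_zero_of_notMem_tsupport hz]
    · exact (hc.norm.integrable_of_hasCompactSupport hsupp.norm).const_mul M
    · exact Eventually.of_forall fun z x _ => by
        simpa using (hd x z).mul_const (φ z)
  refine ⟨key.differentiableAt, fun v => ?_⟩
  rw [key.fderiv, ContinuousLinearMap.integral_apply hint]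
  exact integral_congr_ae (Eventually.of_forall fun z => by simp [mul_comm])

theorem heatK_hasFDerivAt {n : ℕ} (t : ℝ) (y z : EuclideanSpace ℝ (Fin n)) :
    HasFDerivAt (fun y => heatK n y z t)
      ((-(1 / (2 * t)) * heatK n y z t) • innerSL ℝ (y - z)) y := by
  have h1 : HasFDerivAt (fun y : EuclideanSpace ℝ (Fin n) => ‖y - z‖ ^ 2)
      (2 • innerSL ℝ (y - z)) y := by
    simpa using ((hasFDerivAt_id y).sub_const z).norm_sq
  have h2 := ((h1.neg.mul_const (4 * t)⁻¹).exp).const_mul ((4 * π * t) ^ (-(n : ℝ) / 2))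
  unfold heatK
  simp only [div_eq_mul_inv] at h2 ⊢
  refine h2.congr_fderiv ?_
  ext v
  simp
  ring

theorem heatK_cont (n : ℕ) (t : ℝ) :
    Continuous fun p : EuclideanSpace ℝ (Fin n) × EuclideanSpace ℝ (Fin n) =>
      heatK n p.1 p.2 t := by
  unfold heatK
  fun_prop

theorem heatK_cont' (n : ℕ) (t : ℝ) (y : EuclideanSpace ℝ (Fin n)) :
    Continuous fun z => heatK n y z t := by
  unfold heatK
  fun_prop

theorem norm_gradient_sq {n : ℕ} (f : EuclideanSpace ℝ (Fin n) → ℝ)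
    (y : EuclideanSpace ℝ (Fin n)) : ‖gradient f y‖ ^ 2 = ∑ i, (pdv i f y) ^ 2 := by
  rw [EuclideanSpace.norm_sq_eq]
  refine Finset.sum_congr rfl fun i _ => ?_
  have : pdv i f y = gradient f y i := by
    unfold pdv gradient
    have h := InnerProductSpace.toDual_symm_apply (𝕜 := ℝ)
      (x := EuclideanSpace.single i (1 : ℝ)) (y := fderiv ℝ f y)
    rw [← h, EuclideanSpace.inner_single_right]
    simp only [conj_trivial, one_mul]
  rw [this]; simp

set_option maxHeartbeats 2000000 in
/-- The Li–Yau inequality on ℝⁿ: for the positive solution `u` of the heat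
equation with initial data `u₀`, `Δ log u + n/(2t) ≥ 0`; equivalently
`Δu - ‖∇u‖²/u + (n/(2t)) u ≥ 0`. -/
theorem stmt7 (n : ℕ) (hn : 1 ≤ n)
    (u₀ : EuclideanSpace ℝ (Fin n) → ℝ) (hc : Continuous u₀)
    (hsupp : HasCompactSupport u₀) (hnn : ∀ z, 0 ≤ u₀ z) (hne : ∃ z, u₀ z ≠ 0)
    (u : EuclideanSpace ℝ (Fin n) → ℝ → ℝ)
    (hu : ∀ y t, u y t = ∫ z, heatK n y z t * u₀ z) :
    ∀ (y : EuclideanSpace ℝ (Fin n)) (t : ℝ), 0 < t →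
      (0 ≤ lap (fun z => Real.log (u z t)) y + n / (2 * t))
      ∧ 0 ≤ lap (fun z => u z t) y - ‖gradient (fun z => u z t) y‖ ^ 2 / u y t
            + (n / (2 * t)) * u y t := by
  intro y t ht
  have hE : (fun z => u z t) = fun y => ∫ z, heatK n y z t * u₀ z := funext fun z => hu z t
  have hKc := heatK_cont n t
  have hKy : ∀ y, Continuous fun z => heatK n y z t := heatK_cont' n t
  have hKpos : ∀ y z, 0 < heatK n y z t := fun y z => by unfold heatK; positivity
  have hpos : ∀ y, 0 < u y t := by
    intro y
    rw [hu]
    obtain ⟨z, hz⟩ := hne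
    refine Continuous.integral_pos_of_hasCompactSupport_nonneg_nonzero (x := z)
      ((hKy y).mul hc) hsupp.mul_left (fun z => mul_nonneg (hKpos y z).le (hnn z)) ?_
    exact mul_ne_zero (hKpos y z).ne' hz
  -- first derivatives
  have D1 := fun y => aux_diff u₀ hc hsupp (fun y z => heatK n y z t)
    (fun y z => (-(1 / (2 * t)) * heatK n y z t) • innerSL ℝ (y - z)) hKc
    (by
      have : Continuous fun p : EuclideanSpace ℝ (Fin n) × EuclideanSpace ℝ (Fin n) =>
        (-(1 / (2 * t)) * heatK n p.1 p.2 t) • innerSL ℝ (p.1 - p.2) := by fun_prop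
      exact this) (heatK_hasFDerivAt t) y
  rw [← hE] at D1
  have P1 : ∀ i, pdv i (fun z => u z t) = fun y => ∫ z,
      (-(1 / (2 * t)) * heatK n y z t * (y i - z i)) * u₀ z := by
    intro i
    funext y
    unfold pdv
    rw [(D1 y).2]
    simp [EuclideanSpace.inner_single_right]
  have D2 := fun i y => aux_diff u₀ hc hsupp
    (fun y z => -(1 / (2 * t)) * heatK n y z t * (y i - z i))
    (fun y z => (-(1 / (2 * t)) * heatK n y z t) • EuclideanSpace.proj (𝕜 := ℝ) i +
      (y i - z i) • (-(1 / (2 * t))) • (-(1 / (2 * t)) * heatK n y z t) • innerSL ℝ (y - z))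
    (by
      have : Continuous fun p : EuclideanSpace ℝ (Fin n) × EuclideanSpace ℝ (Fin n) =>
        -(1 / (2 * t)) * heatK n p.1 p.2 t * (p.1 i - p.2 i) := by fun_prop
      exact this)
    (by
      have : Continuous fun p : EuclideanSpace ℝ (Fin n) × EuclideanSpace ℝ (Fin n) =>
        (-(1 / (2 * t)) * heatK n p.1 p.2 t) • EuclideanSpace.proj (𝕜 := ℝ) i +
      (p.1 i - p.2 i) • (-(1 / (2 * t))) • (-(1 / (2 * t)) * heatK n p.1 p.2 t) •
        innerSL ℝ (p.1 - p.2) := by fun_prop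
      exact this)
    (fun y z => ((heatK_hasFDerivAt t y z).const_mul _).mul
      (((EuclideanSpace.proj (𝕜 := ℝ) i).hasFDerivAt (x := y)).sub_const (z i))) y
  simp only [← P1] at D2
  -- the key inequality
  have key : ∀ i, (pdv i (fun z => u z t) y) ^ 2 / u y t ≤
      pdv i (pdv i (fun z => u z t)) y + 1 / (2 * t) * u y t := by
    intro i
    set I2 := ∫ z, ((1 / (2 * t)) * (y i - z i)) ^ 2 * (heatK n y z t * u₀ z) with hI2
    have hint : ∀ q : EuclideanSpace ℝ (Fin n) → ℝ, Continuous q →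
        Integrable (fun z => q z * (heatK n y z t * u₀ z)) := fun q hq =>
      (hq.mul ((hKy y).mul hc)).integrable_of_hasCompactSupport hsupp.mul_left.mul_left
    have e0 : u y t = ∫ z, 1 * (heatK n y z t * u₀ z) := by simp [hu]
    have e1 : pdv i (fun z => u z t) y =
        ∫ z, (-(1 / (2 * t)) * (y i - z i)) * (heatK n y z t * u₀ z) := by
      rw [P1]
      exact integral_congr_ae (Eventually.of_forall fun z => by ring)
    have e2 : pdv i (pdv i (fun z => u z t)) y = I2 - 1 / (2 * t) * u y t := by
      rw [e0, hI2, ← integral_const_mul, ← integral_sub (hint _ (by fun_prop))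
        ((hint _ (by fun_prop)).const_mul _)]
      conv_lhs => unfold pdv
      have := (D2 i y).2 (EuclideanSpace.single i 1)
      unfold pdv at this
      rw [this]
      refine integral_congr_ae (Eventually.of_forall fun z => ?_)
      simp [EuclideanSpace.inner_single_right]
      ring
    set I0 := u y t with hI0
    set I1 := pdv i (fun z => u z t) y with hI1
    have h0 : 0 < I0 := hpos y
    set m := I1 / I0 with hm
    have hsq : 0 ≤ ∫ z, ((-(1 / (2 * t)) * (y i - z i)) - m) ^ 2 * (heatK n y z t * u₀ z) :=
      integral_nonneg fun z => mul_nonneg (sq_nonneg _) (mul_nonneg (hKpos y z).le (hnn z))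
    have hex : ∫ z, ((-(1 / (2 * t)) * (y i - z i)) - m) ^ 2 * (heatK n y z t * u₀ z)
        = I2 - 2 * m * I1 + m ^ 2 * I0 := by
      rw [e0, e1, hI2, ← integral_const_mul, ← integral_const_mul,
        ← integral_sub (hint _ (by fun_prop)) ((hint _ (by fun_prop)).const_mul _),
        ← integral_add ?_ ((hint _ (by fun_prop)).const_mul _)]
      · exact integral_congr_ae (Eventually.of_forall fun z => by ring)
      · exact (hint _ (by fun_prop)).sub ((hint _ (by fun_prop)).const_mul _)
    have hmm : I2 - 2 * m * I1 + m ^ 2 * I0 = I2 - I1 ^ 2 / I0 := by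
      rw [hm]; field_simp; ring
    rw [e2]
    linarith
  have ks : 0 ≤ lap (fun z => u z t) y - ‖gradient (fun z => u z t) y‖ ^ 2 / u y t
            + (n / (2 * t)) * u y t := by
    have := Finset.sum_le_sum (s := Finset.univ) fun i _ => key i
    rw [← Finset.sum_div, ← norm_gradient_sq, Finset.sum_add_distrib] at this
    simp only [Finset.sum_const, Finset.card_univ, Fintype.card_fin, nsmul_eq_mul] at this
    unfold lap
    have e : (n : ℝ) * (1 / (2 * t) * u y t) = (n / (2 * t)) * u y t := by ring
    linarith
  refine ⟨?_, ks⟩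
  have L : lap (fun z => Real.log (u z t)) y =
      (lap (fun z => u z t) y - ‖gradient (fun z => u z t) y‖ ^ 2 / u y t) / u y t := by
    rw [norm_gradient_sq]
    unfold lap
    rw [Finset.sum_div, ← Finset.sum_sub_distrib, Finset.sum_div]
    refine Finset.sum_congr rfl fun i _ => ?_
    have l1 : pdv i (fun z => Real.log (u z t)) =
        fun y => pdv i (fun z => u z t) y * (u y t)⁻¹ := by
      funext y
      have := ((D1 y).1.hasFDerivAt.log (hpos y).ne').fderiv
      unfold pdv
      rw [this]
      simp [mul_comm]
    rw [l1]
    have h3 := ((D2 i y).1.hasFDerivAt.mul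
      ((hasDerivAt_inv (hpos y).ne').comp_hasFDerivAt y (D1 y).1.hasFDerivAt)).fderiv
    conv_lhs => unfold pdv
    have h4 := congrArg (fun L => L (EuclideanSpace.single i 1)) h3
    refine Eq.trans h4 ?_
    have := (hpos y).ne'
    simp [pdv]
    field_simp
    ring
  rw [L]
  have h0 := hpos y
  have : (lap (fun z => u z t) y - ‖gradient (fun z => u z t) y‖ ^ 2 / u y t) / u y t
      + n / (2 * t) = (lap (fun z => u z t) y - ‖gradient (fun z => u z t) y‖ ^ 2 / u y t
            + (n / (2 * t)) * u y t) / u y t := by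
    field_simp
  rw [this]
  positivity
end

section
/- Fix n ≥ 1 and τ > 0. Let H : ℝⁿ → (0,∞) be smooth with H, ‖∇H‖ and ‖∇²H‖ all bounded by C e^{-a‖y‖²} for some constants C, a > 0, and let h : ℝⁿ → (0,∞) be smooth with h, ‖∇h‖ and ‖∇²h‖ bounded and with |log h(y)| ≤ C'(1+‖y‖)^k for some C', k. Define f = -log H - (n/2) log(4πτ) and f̃ = f - log h (so Hh = (4πτ)^{-n/2} e^{-f̃}). Then ∫_{ℝⁿ} [ τ(2Δf̃ - ‖∇f̃‖²) + f̃ - n ] H h dy = ∫_{ℝⁿ} [ τ(2Δf - ‖∇f‖²) + f - n ] H h dy + ∫_{ℝⁿ} ( τ ‖∇h‖²/h - h log h ) H dy. -/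
open Real MeasureTheory Filter Set

lemma aux_pow_exp {a : ℝ} (ha : 0 < a) (k : ℕ) : ∃ K : ℝ, 0 < K ∧ ∀ r : ℝ, 0 ≤ r →
    (1 + r) ^ k * Real.exp (-a * r ^ 2) ≤ K * Real.exp (-(a / 2) * r ^ 2) := by
  refine ⟨k.factorial * Real.exp (1 + 1 / (2 * a)), by positivity, fun r hr => ?_⟩
  have h1 := Real.pow_div_factorial_le_exp (1 + r) (by linarith) k
  rw [div_le_iff₀ (by positivity)] at h1
  have h2 : Real.exp (1 + r) * Real.exp (-a * r ^ 2)
      ≤ Real.exp (1 + 1 / (2 * a)) * Real.exp (-(a / 2) * r ^ 2) := by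
    rw [← Real.exp_add, ← Real.exp_add]
    apply Real.exp_le_exp.mpr
    have : 0 ≤ (a * r - 1) ^ 2 / (2 * a) := by positivity
    have e : (a * r - 1) ^ 2 / (2 * a) = a / 2 * r ^ 2 - r + 1 / (2 * a) := by
      field_simp; ring
    linarith
  calc (1 + r) ^ k * Real.exp (-a * r ^ 2)
      ≤ (Real.exp (1 + r) * k.factorial) * Real.exp (-a * r ^ 2) := by gcongr
    _ = k.factorial * (Real.exp (1 + r) * Real.exp (-a * r ^ 2)) := by ring
    _ ≤ k.factorial * (Real.exp (1 + 1 / (2 * a)) * Real.exp (-(a / 2) * r ^ 2)) := by gcongr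
    _ = _ := by ring

lemma aux_xlog {x : ℝ} (hx : 0 < x) : |x * Real.log x| ≤ x ^ 2 + 2 * √x := by
  have hs : 0 < √x := Real.sqrt_pos.mpr hx
  have h1 := Real.log_le_sub_one_of_pos hx
  have h2 := Real.log_le_sub_one_of_pos (inv_pos.mpr hs)
  rw [Real.log_inv, Real.log_sqrt hx.le] at h2
  have h3 : x * (√x)⁻¹ = √x := by
    nth_rewrite 1 [← Real.mul_self_sqrt hx.le]
    field_simp
  rw [abs_le]
  constructor
  · have : x * (-(Real.log x / 2)) ≤ x * (√x)⁻¹ := by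
      gcongr; linarith
    nlinarith [sq_nonneg x]
  · have : x * Real.log x ≤ x * x := by gcongr; linarith
    nlinarith

section
variable {n : ℕ}

lemma aux_int {a K : ℝ} (ha : 0 < a) {F : EuclideanSpace ℝ (Fin n) → ℝ} (hc : Continuous F)
    (hb : ∀ y, |F y| ≤ K * Real.exp (-a * ‖y‖ ^ 2)) : Integrable F := by
  have h0 := (GaussianFourier.integrable_cexp_neg_mul_sq_norm_add (b := (a : ℂ)) (by simpa using ha)
    0 (0 : EuclideanSpace ℝ (Fin n))).norm
  have h1 : Integrable (fun y : EuclideanSpace ℝ (Fin n) => K * Real.exp (-a * ‖y‖ ^ 2)) := by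
    refine (h0.const_mul K).congr (Eventually.of_forall fun y => ?_)
    simp [Complex.norm_exp, ← Complex.ofReal_pow]
  exact h1.mono' hc.aestronglyMeasurable (Eventually.of_forall hb)

lemma norm_grad (φ : EuclideanSpace ℝ (Fin n) → ℝ) (y) : ‖gradient φ y‖ = ‖fderiv ℝ φ y‖ := by
  simp [gradient]

lemma grad_sq (φ : EuclideanSpace ℝ (Fin n) → ℝ) (y) : ‖gradient φ y‖ ^ 2 = ∑ i, pdv i φ y ^ 2 := by
  rw [EuclideanSpace.norm_sq_eq]
  refine Finset.sum_congr rfl fun i _ => ?_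
  have : gradient φ y i = pdv i φ y := by
    rw [pdv, ← inner_gradient_left, EuclideanSpace.inner_single_right]
    simp
  rw [this, Real.norm_eq_abs, sq_abs]

lemma norm_hess (φ : EuclideanSpace ℝ (Fin n) → ℝ) (y) :
    ‖fderiv ℝ (fderiv ℝ φ) y‖ = ‖iteratedFDeriv ℝ 2 φ y‖ := by
  rw [← norm_iteratedFDeriv_fderiv, ← norm_iteratedFDeriv_fderiv, norm_iteratedFDeriv_zero]

lemma pdv_smooth {φ : EuclideanSpace ℝ (Fin n) → ℝ} (hφ : ContDiff ℝ (⊤ : ℕ∞) φ) (i : Fin n) :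
    ContDiff ℝ (⊤ : ℕ∞) (pdv i φ) := by
  unfold pdv
  exact (hφ.fderiv_right (m := (⊤ : ℕ∞)) (by simp)).clm_apply contDiff_const

lemma lap_cont {φ : EuclideanSpace ℝ (Fin n) → ℝ} (hφ : ContDiff ℝ (⊤ : ℕ∞) φ) :
    Continuous (lap φ) := by
  unfold lap
  exact continuous_finsetSum _ fun i _ => (pdv_smooth (pdv_smooth hφ i) i).continuous

lemma pdv_le (φ : EuclideanSpace ℝ (Fin n) → ℝ) (i : Fin n) (y) :
    |pdv i φ y| ≤ ‖gradient φ y‖ := by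
  rw [norm_grad, pdv, ← Real.norm_eq_abs]
  simpa using (fderiv ℝ φ y).le_opNorm (EuclideanSpace.single i 1)

lemma pdv2_le {φ : EuclideanSpace ℝ (Fin n) → ℝ} (hφ : ContDiff ℝ (⊤ : ℕ∞) φ) (i : Fin n) (y) :
    |pdv i (pdv i φ) y| ≤ ‖iteratedFDeriv ℝ 2 φ y‖ := by
  have hd : DifferentiableAt ℝ (fderiv ℝ φ) y :=
    ((hφ.fderiv_right (m := (⊤ : ℕ∞)) (by simp)).differentiable (by simp)) y
  have : pdv i (pdv i φ) y = fderiv ℝ (fderiv ℝ φ) y (EuclideanSpace.single i 1)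
      (EuclideanSpace.single i 1) := by
    have h1 := (hd.hasFDerivAt.clm_apply (hasFDerivAt_const (EuclideanSpace.single i (1 : ℝ)) y)).fderiv
    change fderiv ℝ (fun y => fderiv ℝ φ y (EuclideanSpace.single i 1)) y _ = _
    rw [h1]; simp
  rw [this, ← norm_hess, ← Real.norm_eq_abs]
  simpa using (fderiv ℝ (fderiv ℝ φ) y).le_opNorm₂ (EuclideanSpace.single i 1)
    (EuclideanSpace.single i 1)

lemma aux_grad {φ : EuclideanSpace ℝ (Fin n) → ℝ} (hφ : ContDiff ℝ (⊤ : ℕ∞) φ)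
    (hpos : ∀ y, 0 < φ y) {M : ℝ} (hM : 0 < M) (y) (h1 : ‖gradient φ y‖ ≤ M)
    (h2 : ∀ z, ‖z - y‖ ≤ 1 → ‖iteratedFDeriv ℝ 2 φ z‖ ≤ M) :
    ‖gradient φ y‖ ^ 2 / φ y ≤ 4 * M := by
  rw [div_le_iff₀ (hpos y)]
  have hd := hφ.differentiable (by simp)
  have hd2 := (hφ.fderiv_right (m := (⊤ : ℕ∞)) (by simp)).differentiable (by simp)
  set g := ‖gradient φ y‖ with hg
  have hg0 : 0 ≤ g := norm_nonneg _
  set t := g / (2 * M) with ht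
  have ht0 : 0 ≤ t := by positivity
  have ht1 : t ≤ 1 := by rw [ht, div_le_one (by positivity)]; linarith
  set z := y - (1 / (2 * M)) • gradient φ y with hz
  have hzy : z - y = -((1 / (2 * M)) • gradient φ y) := by rw [hz]; abel
  have hzn : ‖z - y‖ = t := by
    rw [hzy, norm_neg, norm_smul, Real.norm_of_nonneg (by positivity), ← hg, ht]; ring
  have hs := convex_closedBall y t
  have hy : y ∈ Metric.closedBall y t := Metric.mem_closedBall_self ht0
  have hzm : z ∈ Metric.closedBall y t := by rw [mem_closedBall_iff_norm, hzn]
  have k1 : ∀ x ∈ Metric.closedBall y t, ‖fderiv ℝ φ x - fderiv ℝ φ y‖ ≤ M * t := by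
    intro x hx
    have := hs.norm_image_sub_le_of_norm_fderiv_le (𝕜 := ℝ) (f := fderiv ℝ φ) (C := M)
      (fun w _ => hd2 w) (fun w hw => by
        rw [norm_hess]
        exact h2 w ((mem_closedBall_iff_norm.mp hw).trans ht1)) hy hx
    exact this.trans (by gcongr; exact mem_closedBall_iff_norm.mp hx)
  have k2 := hs.norm_image_sub_le_of_norm_fderiv_le' (𝕜 := ℝ) (f := φ) (fun w _ => hd w) k1 hy hzm
  rw [hzn, hzy, map_neg, map_smul, ← inner_gradient_left, real_inner_self_eq_norm_sq, ← hg,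
    Real.norm_eq_abs, smul_eq_mul] at k2
  have k3 := (abs_le.mp k2).2
  have e1 : M * t * t = g ^ 2 / (4 * M) := by rw [ht]; field_simp; ring
  have e2 : 1 / (2 * M) * g ^ 2 = 2 * (g ^ 2 / (4 * M)) := by field_simp; ring
  rw [e1, e2] at k3
  have k4 := hpos z
  have : g ^ 2 / (4 * M) ≤ φ y := by linarith
  rw [div_le_iff₀ (by positivity)] at this
  linarith

lemma pdv_log {φ : EuclideanSpace ℝ (Fin n) → ℝ} (hφ : ContDiff ℝ (⊤ : ℕ∞) φ)
    (hpos : ∀ y, 0 < φ y) (i : Fin n) :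
    pdv i (fun y => Real.log (φ y)) = fun y => pdv i φ y / φ y := by
  funext y
  have := ((hφ.differentiable (by simp) y).hasFDerivAt.log (hpos y).ne').fderiv
  simp only [pdv]
  rw [this]; simp; ring

lemma pdv_div {φ ψ : EuclideanSpace ℝ (Fin n) → ℝ} (hφ : ContDiff ℝ (⊤ : ℕ∞) φ)
    (hψ : ContDiff ℝ (⊤ : ℕ∞) ψ)
    (hpos : ∀ y, 0 < φ y) (i : Fin n) (y) :
    pdv i (fun y => ψ y / φ y) y = pdv i ψ y / φ y - ψ y * pdv i φ y / φ y ^ 2 := by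
  have hp := (hpos y).ne'
  have h1 := ((hψ.differentiable (by simp) y).hasFDerivAt.mul
    ((hasDerivAt_inv hp).comp_hasFDerivAt y (hφ.differentiable (by simp) y).hasFDerivAt)).fderiv
  simp only [pdv]
  have e : (fun y => ψ y / φ y) = ψ * ((fun x => x⁻¹) ∘ φ) := by
    funext y; simp [div_eq_mul_inv]
  rw [e, h1]; simp; field_simp; ring

lemma pdv2_log {φ : EuclideanSpace ℝ (Fin n) → ℝ} (hφ : ContDiff ℝ (⊤ : ℕ∞) φ)
    (hpos : ∀ y, 0 < φ y) (i : Fin n) (y) :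
    pdv i (pdv i (fun y => Real.log (φ y))) y
      = pdv i (pdv i φ) y / φ y - pdv i φ y ^ 2 / φ y ^ 2 := by
  rw [pdv_log hφ hpos, pdv_div hφ (pdv_smooth hφ i) hpos]
  ring

lemma pdv_sub {φ ψ : EuclideanSpace ℝ (Fin n) → ℝ} (hφ : ContDiff ℝ (⊤ : ℕ∞) φ)
    (hψ : ContDiff ℝ (⊤ : ℕ∞) ψ) (i : Fin n) :
    pdv i (fun y => φ y - ψ y) = fun y => pdv i φ y - pdv i ψ y := by
  funext y
  simp only [pdv]
  rw [fderiv_fun_sub (hφ.differentiable (by simp) y) (hψ.differentiable (by simp) y)]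
  simp

lemma pdv_const (c : ℝ) (i : Fin n) :
    pdv i (fun _ => c) = fun _ => 0 := by
  funext y
  simp [pdv]

lemma lap_sub {φ ψ : EuclideanSpace ℝ (Fin n) → ℝ} (hφ : ContDiff ℝ (⊤ : ℕ∞) φ)
    (hψ : ContDiff ℝ (⊤ : ℕ∞) ψ) (y) :
    lap (fun y => φ y - ψ y) y = lap φ y - lap ψ y := by
  simp only [lap]
  rw [← Finset.sum_sub_distrib]
  refine Finset.sum_congr rfl fun i _ => ?_
  rw [pdv_sub hφ hψ, pdv_sub (pdv_smooth hφ i) (pdv_smooth hψ i)]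

lemma lap_log {φ : EuclideanSpace ℝ (Fin n) → ℝ} (hφ : ContDiff ℝ (⊤ : ℕ∞) φ)
    (hpos : ∀ y, 0 < φ y) (y) :
    lap (fun y => Real.log (φ y)) y = lap φ y / φ y - ‖gradient φ y‖ ^ 2 / φ y ^ 2 := by
  rw [grad_sq]
  simp only [lap, pdv2_log hφ hpos]
  rw [Finset.sum_sub_distrib, Finset.sum_div, Finset.sum_div]

lemma lap_abs {φ : EuclideanSpace ℝ (Fin n) → ℝ} (hφ : ContDiff ℝ (⊤ : ℕ∞) φ) (y) :
    |lap φ y| ≤ n * ‖iteratedFDeriv ℝ 2 φ y‖ := by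
  refine (Finset.abs_sum_le_sum_abs _ _).trans ?_
  refine (Finset.sum_le_sum fun i _ => pdv2_le hφ i y).trans ?_
  simp

lemma grad_sq_cont {φ : EuclideanSpace ℝ (Fin n) → ℝ} (hφ : ContDiff ℝ (⊤ : ℕ∞) φ) :
    Continuous fun y => ‖gradient φ y‖ ^ 2 := by
  simp only [grad_sq]
  exact continuous_finsetSum _ fun i _ => (pdv_smooth hφ i).continuous.pow 2
end

/-- The entropy decomposition identity
`𝒲_h(g,H,τ) = 𝒲(g,Hh,τ) + ∫ (τ‖∇h‖²/h - h log h) H dy` on flat ℝⁿ: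
with `f = -log H - (n/2) log(4πτ)` and `f̃ = f - log h`,
`∫ [τ(2Δf̃-‖∇f̃‖²)+f̃-n] H h = ∫ [τ(2Δf-‖∇f‖²)+f-n] H h + ∫ (τ‖∇h‖²/h - h log h) H`. -/
theorem stmt11 (n : ℕ) (hn : 1 ≤ n) (τ : ℝ) (hτ : 0 < τ)
    (H h : EuclideanSpace ℝ (Fin n) → ℝ)
    (hHsmooth : ContDiff ℝ (⊤ : ℕ∞) H) (hHpos : ∀ y, 0 < H y)
    (hHdecay : ∃ C a : ℝ, 0 < C ∧ 0 < a ∧ ∀ y,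
      H y ≤ C * Real.exp (-a * ‖y‖ ^ 2)
      ∧ ‖gradient H y‖ ≤ C * Real.exp (-a * ‖y‖ ^ 2)
      ∧ ‖iteratedFDeriv ℝ 2 H y‖ ≤ C * Real.exp (-a * ‖y‖ ^ 2))
    (hhsmooth : ContDiff ℝ (⊤ : ℕ∞) h) (hhpos : ∀ y, 0 < h y)
    (hhbdd : ∃ C' : ℝ, ∀ y,
      h y ≤ C' ∧ ‖gradient h y‖ ≤ C' ∧ ‖iteratedFDeriv ℝ 2 h y‖ ≤ C')
    (hlogh : ∃ (C' : ℝ) (k : ℕ), ∀ y, |Real.log (h y)| ≤ C' * (1 + ‖y‖) ^ k)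
    (f ftil : EuclideanSpace ℝ (Fin n) → ℝ)
    (hf : ∀ y, f y = -Real.log (H y) - (n / 2 : ℝ) * Real.log (4 * π * τ))
    (hftil : ∀ y, ftil y = f y - Real.log (h y)) :
    (∫ y, (τ * (2 * lap ftil y - ‖gradient ftil y‖ ^ 2) + ftil y - n) * H y * h y)
      = (∫ y, (τ * (2 * lap f y - ‖gradient f y‖ ^ 2) + f y - n) * H y * h y)
        + ∫ y, (τ * ‖gradient h y‖ ^ 2 / h y - h y * Real.log (h y)) * H y := by
  obtain ⟨C, a, hC, ha, hH⟩ := hHdecay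
  obtain ⟨C', hh⟩ := hhbdd
  obtain ⟨C₂, k, hl⟩ := hlogh
  have hC' : 0 < C' := (hhpos 0).trans_le (hh 0).1
  have hC₂ : 0 ≤ C₂ := by
    have := (abs_nonneg _).trans (hl 0)
    simpa using this
  have ha2 : 0 < a / 2 := by positivity
  obtain ⟨K, hK, hKb⟩ := aux_pow_exp ha k
  set c : ℝ := (n / 2 : ℝ) * Real.log (4 * π * τ) with hc
  have cH := hHsmooth.continuous
  have ch := hhsmooth.continuous
  have sLH : ContDiff ℝ (⊤ : ℕ∞) fun y => Real.log (H y) := hHsmooth.log fun y => (hHpos y).ne'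
  have sLh : ContDiff ℝ (⊤ : ℕ∞) fun y => Real.log (h y) := hhsmooth.log fun y => (hhpos y).ne'
  have ef : f = fun y => -c - Real.log (H y) := by funext y; rw [hf]; ring
  have sf : ContDiff ℝ (⊤ : ℕ∞) f := by rw [ef]; exact contDiff_const.sub sLH
  have eft : ftil = fun y => f y - Real.log (h y) := funext hftil
  have pf : ∀ i y, pdv i f y = -(pdv i H y / H y) := by
    intro i y
    rw [ef, pdv_sub contDiff_const sLH, pdv_const, pdv_log hHsmooth hHpos]; simp
  have pft : ∀ i y, pdv i ftil y = -(pdv i H y / H y) - pdv i h y / h y := by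
    intro i y
    rw [eft, pdv_sub sf sLh, pdv_log hhsmooth hhpos]; simp [pf]
  have lf : ∀ y, lap f y = -(lap H y / H y - ‖gradient H y‖ ^ 2 / H y ^ 2) := by
    intro y
    rw [ef, lap_sub contDiff_const sLH, lap_log hHsmooth hHpos]
    have : lap (fun _ : EuclideanSpace ℝ (Fin n) => -c) y = 0 := by
      simp [lap, pdv_const]
    rw [this]; ring
  have lft : ∀ y, lap ftil y = -(lap H y / H y - ‖gradient H y‖ ^ 2 / H y ^ 2)
      - (lap h y / h y - ‖gradient h y‖ ^ 2 / h y ^ 2) := by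
    intro y
    rw [eft, lap_sub sf sLh, lap_log hhsmooth hhpos, lf]
  have gf : ∀ y, ‖gradient f y‖ ^ 2 = ‖gradient H y‖ ^ 2 / H y ^ 2 := by
    intro y
    rw [grad_sq, grad_sq, Finset.sum_div]
    refine Finset.sum_congr rfl fun i _ => ?_
    rw [pf]; ring
  have gft : ∀ y, ‖gradient ftil y‖ ^ 2 = ‖gradient H y‖ ^ 2 / H y ^ 2
      + ‖gradient h y‖ ^ 2 / h y ^ 2 + 2 * (∑ i, pdv i H y * pdv i h y) / (H y * h y) := by
    intro y
    rw [grad_sq, grad_sq, grad_sq, Finset.sum_div, Finset.sum_div, Finset.mul_sum, Finset.sum_div,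
      ← Finset.sum_add_distrib, ← Finset.sum_add_distrib]
    refine Finset.sum_congr rfl fun i _ => ?_
    have := (hHpos y).ne'
    have := (hhpos y).ne'
    rw [pft]; field_simp; ring
  -- bounds
  have hE : ∀ y : EuclideanSpace ℝ (Fin n),
      Real.exp (-a * ‖y‖ ^ 2) ≤ Real.exp (-(a / 2) * ‖y‖ ^ 2) := by
    intro y
    apply Real.exp_le_exp.mpr
    nlinarith [sq_nonneg ‖y‖, mul_nonneg ha.le (sq_nonneg ‖y‖)]
  have gH : ∀ y, ‖gradient H y‖ ^ 2 / H y
      ≤ 4 * (C * Real.exp a * Real.exp (-(a / 2) * ‖y‖ ^ 2)) := by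
    intro y
    have h1a : (1 : ℝ) ≤ Real.exp a := Real.one_le_exp ha.le
    refine aux_grad hHsmooth hHpos (by positivity) y ?_ ?_
    · refine (hH y).2.1.trans ?_
      calc C * Real.exp (-a * ‖y‖ ^ 2) ≤ C * Real.exp (-(a / 2) * ‖y‖ ^ 2) := 
            mul_le_mul_of_nonneg_left (hE y) hC.le
        _ = C * 1 * Real.exp (-(a / 2) * ‖y‖ ^ 2) := by ring
        _ ≤ _ := by gcongr
    · intro z hz
      refine (hH z).2.2.trans ?_
      rw [mul_assoc, ← Real.exp_add]
      gcongr
      have h3 : ‖y‖ ≤ ‖z‖ + 1 := by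
        have : ‖y‖ ≤ ‖z‖ + ‖z - y‖ := by
          have := norm_sub_le z (z - y)
          simpa using this
        linarith
      have h4 : ‖y‖ ^ 2 ≤ 2 * ‖z‖ ^ 2 + 2 := by
        nlinarith [norm_nonneg y, norm_nonneg z, sq_nonneg (‖z‖ - 1)]
      nlinarith
  have gh : ∀ y, ‖gradient h y‖ ^ 2 / h y ≤ 4 * C' := fun y =>
    aux_grad hhsmooth hhpos hC' y (hh y).2.1 fun z _ => (hh z).2.2
  have Hn : ∀ y, ‖H y‖ = H y := fun y => Real.norm_of_nonneg (hHpos y).le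
  -- integrability
  have iA : Integrable fun y => lap H y * h y := by
    refine aux_int (K := n * C * C') ha ((lap_cont hHsmooth).mul ch) fun y => ?_
    rw [abs_mul, abs_of_pos (hhpos y)]
    calc |lap H y| * h y ≤ (n * (C * Real.exp (-a * ‖y‖ ^ 2))) * C' :=
          mul_le_mul ((lap_abs hHsmooth y).trans
            (mul_le_mul_of_nonneg_left (hH y).2.2 (Nat.cast_nonneg n)))
            (hh y).1 (hhpos y).le (by positivity)
      _ = _ := by ring
  have iB : Integrable fun y => ‖gradient H y‖ ^ 2 / H y * h y := by
    refine aux_int (K := 4 * C * Real.exp a * C') ha2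
      (((grad_sq_cont hHsmooth).div cH fun y => (hHpos y).ne').mul ch) fun y => ?_
    have := hHpos y
    rw [abs_mul, abs_of_pos (hhpos y), abs_of_nonneg (by positivity)]
    calc ‖gradient H y‖ ^ 2 / H y * h y
        ≤ (4 * (C * Real.exp a * Real.exp (-(a / 2) * ‖y‖ ^ 2))) * C' :=
          mul_le_mul (gH y) (hh y).1 (hhpos y).le (by positivity)
      _ = _ := by ring
  have iD : Integrable fun y => H y * Real.log (H y) * h y := by
    refine aux_int (K := (C ^ 2 + 2 * √C) * C') ha2 ((cH.mul sLH.continuous).mul ch) fun y => ?_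
    rw [abs_mul, abs_of_pos (hhpos y)]
    have e1 : H y ^ 2 ≤ C ^ 2 * Real.exp (-(a / 2) * ‖y‖ ^ 2) := by
      have h1 : H y ≤ C * 1 := (hH y).1.trans (by
        gcongr
        apply Real.exp_le_one_iff.mpr
        nlinarith [mul_nonneg ha.le (sq_nonneg ‖y‖)])
      calc H y ^ 2 = H y * H y := by ring
        _ ≤ (C * 1) * (C * Real.exp (-(a / 2) * ‖y‖ ^ 2)) :=
          mul_le_mul h1 ((hH y).1.trans (mul_le_mul_of_nonneg_left (hE y) hC.le)) (hHpos y).le (by positivity)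
        _ = _ := by ring
    have e2 : √(H y) ≤ √C * Real.exp (-(a / 2) * ‖y‖ ^ 2) := by
      refine (Real.sqrt_le_sqrt (hH y).1).trans_eq ?_
      rw [Real.sqrt_mul hC.le, ← Real.exp_half]
      congr 2; ring
    calc |H y * Real.log (H y)| * h y
        ≤ (C ^ 2 * Real.exp (-(a / 2) * ‖y‖ ^ 2) + 2 * (√C * Real.exp (-(a / 2) * ‖y‖ ^ 2))) * C' :=
          mul_le_mul ((aux_xlog (hHpos y)).trans (by gcongr)) (hh y).1 (hhpos y).le (by positivity)
      _ = _ := by ring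
  have iG : Integrable fun y => H y * h y := by
    refine aux_int (K := C * C') ha (cH.mul ch) fun y => ?_
    rw [abs_mul, abs_of_pos (hhpos y), abs_of_pos (hHpos y)]
    calc H y * h y ≤ (C * Real.exp (-a * ‖y‖ ^ 2)) * C' :=
          mul_le_mul (hH y).1 (hh y).1 (hhpos y).le (by positivity)
      _ = _ := by ring
  have iP : Integrable fun y => ‖gradient h y‖ ^ 2 / h y * H y := by
    refine aux_int (K := 4 * C' * C) ha
      (((grad_sq_cont hhsmooth).div ch fun y => (hhpos y).ne').mul cH) fun y => ?_
    have := hhpos y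
    rw [abs_mul, abs_of_pos (hHpos y), abs_of_nonneg (by positivity)]
    calc ‖gradient h y‖ ^ 2 / h y * H y
        ≤ (4 * C') * (C * Real.exp (-a * ‖y‖ ^ 2)) :=
          mul_le_mul (gh y) (hH y).1 (hHpos y).le (by positivity)
      _ = _ := by ring
  have iQ : Integrable fun y => h y * Real.log (h y) * H y := by
    refine aux_int (K := C' * C₂ * C * K) ha2 ((ch.mul sLh.continuous).mul cH) fun y => ?_
    rw [abs_mul, abs_mul, abs_of_pos (hHpos y), abs_of_pos (hhpos y)]
    calc h y * |Real.log (h y)| * H y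
        ≤ C' * (C₂ * (1 + ‖y‖) ^ k) * (C * Real.exp (-a * ‖y‖ ^ 2)) := by
          have := (hhpos y).le
          have := (hHpos y).le
          gcongr
          · exact (hh y).1
          · exact hl y
          · exact (hH y).1
      _ = C' * C₂ * C * ((1 + ‖y‖) ^ k * Real.exp (-a * ‖y‖ ^ 2)) := by ring
      _ ≤ C' * C₂ * C * (K * Real.exp (-(a / 2) * ‖y‖ ^ 2)) := 
          mul_le_mul_of_nonneg_left (hKb _ (norm_nonneg y)) (by positivity)
      _ = _ := by ring
  have iS1 : ∀ i, Integrable fun y => pdv i H y * pdv i h y := by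
    intro i
    refine aux_int (K := C * C') ha
      ((pdv_smooth hHsmooth i).continuous.mul (pdv_smooth hhsmooth i).continuous) fun y => ?_
    rw [abs_mul]
    calc |pdv i H y| * |pdv i h y| ≤ (C * Real.exp (-a * ‖y‖ ^ 2)) * C' :=
          mul_le_mul ((pdv_le H i y).trans (hH y).2.1) ((pdv_le h i y).trans (hh y).2.1)
            (abs_nonneg _) (by positivity)
      _ = _ := by ring
  have iS2 : ∀ i, Integrable fun y => H y * pdv i (pdv i h) y := by
    intro i
    refine aux_int (K := C * C') ha
      (cH.mul (pdv_smooth (pdv_smooth hhsmooth i) i).continuous) fun y => ?_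
    rw [abs_mul, abs_of_pos (hHpos y)]
    calc H y * |pdv i (pdv i h) y| ≤ (C * Real.exp (-a * ‖y‖ ^ 2)) * C' :=
          mul_le_mul (hH y).1 ((pdv2_le hhsmooth i y).trans (hh y).2.2)
            (abs_nonneg _) (by positivity)
      _ = _ := by ring
  have iS0 : ∀ i, Integrable fun y => H y * pdv i h y := by
    intro i
    refine aux_int (K := C * C') ha
      (cH.mul (pdv_smooth hhsmooth i).continuous) fun y => ?_
    rw [abs_mul, abs_of_pos (hHpos y)]
    calc H y * |pdv i h y| ≤ (C * Real.exp (-a * ‖y‖ ^ 2)) * C' :=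
          mul_le_mul (hH y).1 ((pdv_le h i y).trans (hh y).2.1)
            (abs_nonneg _) (by positivity)
      _ = _ := by ring
  have ibp : ∀ i, ∫ y, (pdv i H y * pdv i h y + H y * pdv i (pdv i h) y) = 0 := by
    intro i
    rw [integral_add (iS1 i) (iS2 i)]
    have := integral_mul_fderiv_eq_neg_fderiv_mul_of_integrable (μ := volume) (𝕜 := ℝ)
      (f := H) (g := pdv i h) (v := EuclideanSpace.single i 1) (iS1 i) (iS2 i) (iS0 i)
      (fun x _ => hHsmooth.differentiable (by simp) x)
      (fun x _ => (pdv_smooth hhsmooth i).differentiable (by simp) x)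
    change ∫ y, H y * pdv i (pdv i h) y = - ∫ y, pdv i H y * pdv i h y at this
    rw [this]; ring
  have iS : Integrable fun y => ∑ i, (pdv i H y * pdv i h y + H y * pdv i (pdv i h) y) :=
    integrable_finsetSum _ fun i _ => (iS1 i).add (iS2 i)
  have hS : ∫ y, ∑ i, (pdv i H y * pdv i h y + H y * pdv i (pdv i h) y) = 0 := by
    have e := integral_finsetSum (μ := volume) Finset.univ
      (f := fun i y => pdv i H y * pdv i h y + H y * pdv i (pdv i h) y)
      fun i _ => (iS1 i).add (iS2 i)
    rw [e]
    exact Finset.sum_eq_zero fun i _ => ibp i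
  have iR1 : Integrable fun y =>
      (τ * (2 * lap f y - ‖gradient f y‖ ^ 2) + f y - n) * H y * h y := by
    refine ((((iA.const_mul (-2 * τ)).add (iB.const_mul τ)).sub iD).sub
      (iG.const_mul (c + n))).congr (Eventually.of_forall fun y => ?_)
    have := (hHpos y).ne'
    simp only [Pi.add_apply, Pi.sub_apply]
    rw [lf, gf, hf]; field_simp; ring
  have iR2 : Integrable fun y =>
      (τ * ‖gradient h y‖ ^ 2 / h y - h y * Real.log (h y)) * H y := by
    refine ((iP.const_mul τ).sub iQ).congr (Eventually.of_forall fun y => ?_)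
    simp only [Pi.sub_apply]
    ring
  have key : ∀ y, (τ * (2 * lap ftil y - ‖gradient ftil y‖ ^ 2) + ftil y - n) * H y * h y
      = ((τ * (2 * lap f y - ‖gradient f y‖ ^ 2) + f y - n) * H y * h y
        + (τ * ‖gradient h y‖ ^ 2 / h y - h y * Real.log (h y)) * H y)
        + (-2 * τ) * ∑ i, (pdv i H y * pdv i h y + H y * pdv i (pdv i h) y) := by
    intro y
    have := (hHpos y).ne'
    have := (hhpos y).ne'
    rw [Finset.sum_add_distrib, ← Finset.mul_sum]
    change _ = _ + (-2 * τ) * (_ + H y * lap h y)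
    rw [lft, gft, lf, gf, hftil]
    field_simp; ring
  simp_rw [key]
  have iR : Integrable fun y => (τ * (2 * lap f y - ‖gradient f y‖ ^ 2) + f y - n) * H y * h y
        + (τ * ‖gradient h y‖ ^ 2 / h y - h y * Real.log (h y)) * H y := iR1.add iR2
  rw [integral_add iR (iS.const_mul _), integral_add iR1 iR2, integral_const_mul, hS]
  ring
end

section
/- Fix n ≥ 1, x₀ ∈ ℝⁿ and t₀ > 0. For 0 < t < t₀ write τ = t₀ - t and Ĥ(y,t) = (4πτ)^{-n/2} exp(-‖x₀-y‖²/(4τ)); for r > 0 define E_r = { (y,t) : 0 < t < t₀ and Ĥ(y,t) ≥ r^{-n} } and ψ_r(y,t) = log Ĥ(y,t) + n log r. Let Q : ℝⁿ × (0, t₀] → ℝ be smooth, and set I(r) = r^{-n} ∫_{E_r} ‖∇ψ_r‖² Q dy dt, where ∇ is the spatial gradient. Then for all 0 < r₁ ≤ r₂ with r₂² < 4π t₀ one has I(r₂) - I(r₁) = - ∫_{r₁}^{r₂} (n/r^{n+1}) ( ∫_{E_r} ψ_r ( ∂Q/∂t - ΔQ ) dy dt ) dr. -/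
open Real MeasureTheory Filter Set

namespace HB

/-- model log kernel -/
noncomputable def ps (n : ℕ) (p : EuclideanSpace ℝ (Fin n) × ℝ) : ℝ :=
  -((n:ℝ)/2) * Real.log (4 * π * p.2) - ‖p.1‖^2 / (4 * p.2)

/-- model heat ball -/
def B (n : ℕ) : Set (EuclideanSpace ℝ (Fin n) × ℝ) := {p | 0 < p.2 ∧ 0 ≤ ps n p}

lemma B_meas (n : ℕ) : MeasurableSet (B n) := by
  have h1 : Measurable (ps n) := by
    unfold ps; fun_prop
  exact (measurableSet_lt measurable_const measurable_snd).inter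
    (measurableSet_le measurable_const h1)

lemma B_s {n : ℕ} (hn : 1 ≤ n) {p : EuclideanSpace ℝ (Fin n) × ℝ} (hp : p ∈ B n) :
    4 * π * p.2 ≤ 1 := by
  obtain ⟨h1, h2⟩ := hp
  by_contra! h
  have h3 := Real.log_pos h
  have hn' : (1:ℝ) ≤ n := by exact_mod_cast hn
  have : 0 ≤ ‖p.1‖^2 / (4 * p.2) := by positivity
  unfold ps at h2
  nlinarith [mul_pos (show (0:ℝ) < n by linarith) h3]

lemma B_s1 {n : ℕ} (hn : 1 ≤ n) {p : EuclideanSpace ℝ (Fin n) × ℝ} (hp : p ∈ B n) :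
    p.2 ≤ 1 := by
  have := B_s hn hp
  nlinarith [Real.pi_gt_three, hp.1]

lemma B_log {n : ℕ} (_hn : 1 ≤ n) {p : EuclideanSpace ℝ (Fin n) × ℝ} (hp : p ∈ B n) :
    -Real.log (4 * π * p.2) ≤ 6 * p.2 ^ (-(1/6):ℝ) := by
  have h1 := hp.1
  have hb : p.2 ≤ 4 * π * p.2 := by nlinarith [Real.pi_gt_three]
  have h2 : -Real.log (4 * π * p.2) ≤ Real.log (p.2⁻¹) := by
    rw [Real.log_inv]
    have := Real.log_le_log h1 hb
    linarith
  have h3 := Real.log_le_rpow_div (x := p.2⁻¹) (by positivity) (show (0:ℝ) < 1/6 by norm_num)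
  rw [Real.inv_rpow h1.le, ← Real.rpow_neg h1.le] at h3
  linarith

lemma B_norm {n : ℕ} (hn : 1 ≤ n) {p : EuclideanSpace ℝ (Fin n) × ℝ} (hp : p ∈ B n) :
    ‖p.1‖^2 ≤ 12 * n * p.2 ^ (5/6:ℝ) := by
  have h1 := hp.1
  have h2 := hp.2
  have h3 := B_log hn hp
  unfold ps at h2
  have h4 : ‖p.1‖^2 / (4 * p.2) ≤ (n/2) * (6 * p.2 ^ (-(1/6):ℝ)) := by
    have : (n/2:ℝ) * -Real.log (4 * π * p.2) ≤ (n/2) * (6 * p.2 ^ (-(1/6):ℝ)) := by gcongr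
    linarith
  rw [div_le_iff₀ (by positivity)] at h4
  have h5 : p.2 ^ (5/6:ℝ) = p.2 ^ (-(1/6):ℝ) * p.2 := by
    rw [← Real.rpow_add_one h1.ne']; norm_num
  rw [h5]; linarith

lemma B_norm1 {n : ℕ} (hn : 1 ≤ n) {p : EuclideanSpace ℝ (Fin n) × ℝ} (hp : p ∈ B n) :
    ‖p.1‖^2 ≤ 12 * n := by
  have h := B_norm hn hp
  have : p.2 ^ (5/6:ℝ) ≤ 1 := Real.rpow_le_one hp.1.le (B_s1 hn hp) (by norm_num)
  have hn' : (0:ℝ) ≤ n := by positivity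
  nlinarith

lemma B_ps {n : ℕ} (hn : 1 ≤ n) {p : EuclideanSpace ℝ (Fin n) × ℝ} (hp : p ∈ B n) :
    ps n p ≤ 3 * n * p.2 ^ (-(7/6):ℝ) := by
  have h1 := hp.1
  have h3 := B_log hn hp
  have h4 : (n/2:ℝ) * -Real.log (4 * π * p.2) ≤ (n/2) * (6 * p.2 ^ (-(1/6):ℝ)) := by gcongr
  have : 0 ≤ ‖p.1‖^2 / (4 * p.2) := by positivity
  have h5 : p.2 ^ (-(1/6):ℝ) ≤ p.2 ^ (-(7/6):ℝ) :=
    Real.rpow_le_rpow_of_exponent_ge h1 (B_s1 hn hp) (by norm_num)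
  have hn' : (0:ℝ) ≤ n := by positivity
  unfold ps
  nlinarith

lemma B_int {n : ℕ} (hn : 1 ≤ n) :
    IntegrableOn (fun p : EuclideanSpace ℝ (Fin n) × ℝ => p.2 ^ (-(7/6):ℝ)) (B n) := by
  rw [← integrable_indicator_iff (B_meas n)]
  have hm : Measurable ((B n).indicator
      (fun p : EuclideanSpace ℝ (Fin n) × ℝ => p.2 ^ (-(7/6):ℝ))) :=
    Measurable.indicator (by fun_prop) (B_meas n)
  refine ⟨hm.aestronglyMeasurable, ?_⟩
  have hn' : (1:ℝ) ≤ n := by exact_mod_cast hn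
  set c : ℝ := √(12 * n) with hc
  have hc0 : 0 ≤ c := Real.sqrt_nonneg _
  unfold HasFiniteIntegral
  rw [Measure.volume_eq_prod, lintegral_prod_symm' _ (by fun_prop)]
  have key : ∀ s : ℝ, ∫⁻ z, ‖(B n).indicator
      (fun p : EuclideanSpace ℝ (Fin n) × ℝ => p.2 ^ (-(7/6):ℝ)) (z, s)‖ₑ
      ≤ (Ioc (0:ℝ) 1).indicator (fun s => ENNReal.ofReal (c ^ n * s ^ (-(3/4):ℝ)) *
        volume (Metric.closedBall (0:EuclideanSpace ℝ (Fin n)) 1)) s := by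
    intro s
    by_cases hs : s ∈ Ioc (0:ℝ) 1
    · have hs0 := hs.1
      rw [indicator_of_mem hs]
      calc _ ≤ ∫⁻ z, (Metric.closedBall (0:EuclideanSpace ℝ (Fin n)) (c * s ^ (5/12:ℝ))).indicator
              (fun _ => ENNReal.ofReal (s ^ (-(7/6):ℝ))) z := by
            apply lintegral_mono
            intro z
            by_cases hz : (z, s) ∈ B n
            · have h1 := B_norm hn hz
              have h2 : z ∈ Metric.closedBall (0:EuclideanSpace ℝ (Fin n)) (c * s ^ (5/12:ℝ)) := by
                rw [mem_closedBall_zero_iff]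
                refine le_of_sq_le_sq ?_ (by positivity)
                rw [mul_pow, hc, Real.sq_sqrt (by positivity), ← Real.rpow_mul_natCast hs0.le]
                have e : (5/12:ℝ) * ((2:ℕ):ℝ) = 5/6 := by norm_num
                rw [e]
                exact h1
              simp only [indicator_of_mem hz, indicator_of_mem h2]
              rw [Real.enorm_eq_ofReal (by positivity)]
            · simp only [indicator_of_notMem hz]; simp
        _ = ENNReal.ofReal (s ^ (-(7/6):ℝ)) *
            volume (Metric.closedBall (0:EuclideanSpace ℝ (Fin n)) (c * s ^ (5/12:ℝ))) := by
            rw [lintegral_indicator_const Metric.isClosed_closedBall.measurableSet]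
        _ ≤ _ := by
            rw [Measure.addHaar_closedBall' _ _ (by positivity), ← mul_assoc,
              ← ENNReal.ofReal_mul (by positivity)]
            refine mul_le_mul' (ENNReal.ofReal_le_ofReal ?_) le_rfl
            rw [finrank_euclideanSpace_fin, mul_pow]
            have h1 : (s ^ (5/12:ℝ)) ^ n ≤ s ^ (5/12:ℝ) :=
              pow_le_of_le_one (by positivity) (Real.rpow_le_one hs0.le hs.2 (by norm_num)) (by omega)
            calc s ^ (-(7/6):ℝ) * (c ^ n * (s ^ (5/12:ℝ)) ^ n)
                ≤ s ^ (-(7/6):ℝ) * (c ^ n * s ^ (5/12:ℝ)) := by gcongr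
              _ = c ^ n * (s ^ (-(7/6):ℝ) * s ^ (5/12:ℝ)) := by ring
              _ = _ := by rw [← Real.rpow_add hs0]; norm_num
    · rw [indicator_of_notMem hs]
      have : ∀ z : EuclideanSpace ℝ (Fin n), (z, s) ∉ B n := fun z hz =>
        hs ⟨hz.1, B_s1 hn hz⟩
      simp [this]
  refine lt_of_le_of_lt (lintegral_mono key) ?_
  rw [lintegral_indicator measurableSet_Ioc, lintegral_mul_const _ (by fun_prop)]
  refine ENNReal.mul_lt_top ?_ measure_closedBall_lt_top
  have h1 : IntegrableOn (fun s : ℝ => c ^ n * s ^ (-(3/4):ℝ)) (Ioc 0 1) := by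
    have := (intervalIntegral.intervalIntegrable_rpow' (a := 0) (b := 1)
      (show (-1:ℝ) < -(3/4) by norm_num)).const_mul (c ^ n)
    rwa [intervalIntegrable_iff_integrableOn_Ioc_of_le zero_le_one] at this
  exact h1.lintegral_lt_top

end HB

namespace HB

noncomputable def psi (n : ℕ) (x₀ : EuclideanSpace ℝ (Fin n)) (t₀ r : ℝ)
    (p : EuclideanSpace ℝ (Fin n) × ℝ) : ℝ :=
  -((n:ℝ)/2) * Real.log (4 * π * (t₀ - p.2)) - ‖p.1 - x₀‖^2 / (4 * (t₀ - p.2)) + n * Real.log r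

def Er (n : ℕ) (x₀ : EuclideanSpace ℝ (Fin n)) (t₀ r : ℝ) :
    Set (EuclideanSpace ℝ (Fin n) × ℝ) := {p | p.2 < t₀ ∧ 0 ≤ psi n x₀ t₀ r p}

lemma psi_meas (n : ℕ) (x₀ : EuclideanSpace ℝ (Fin n)) (t₀ r : ℝ) :
    Measurable (psi n x₀ t₀ r) := by
  unfold psi; fun_prop

lemma Er_meas (n : ℕ) (x₀ : EuclideanSpace ℝ (Fin n)) (t₀ r : ℝ) :
    MeasurableSet (Er n x₀ t₀ r) :=
  (measurableSet_lt measurable_snd measurable_const).inter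
    (measurableSet_le measurable_const (psi_meas n x₀ t₀ r))

/-- parabolic scaling -/
noncomputable def A (n : ℕ) (x₀ : EuclideanSpace ℝ (Fin n)) (t₀ r : ℝ) (hr : 0 < r) :
    (EuclideanSpace ℝ (Fin n) × ℝ) ≃ₜ (EuclideanSpace ℝ (Fin n) × ℝ) :=
  ((Homeomorph.smulOfNeZero r hr.ne').trans (Homeomorph.addLeft x₀)).prodCongr
    ((Homeomorph.smulOfNeZero (-(r^2)) (by simp [hr.ne'])).trans (Homeomorph.addLeft t₀))

lemma A_apply {n : ℕ} (x₀ : EuclideanSpace ℝ (Fin n)) (t₀ r : ℝ) (hr : 0 < r)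
    (p : EuclideanSpace ℝ (Fin n) × ℝ) :
    A n x₀ t₀ r hr p = (x₀ + r • p.1, t₀ - r^2 * p.2) := by
  have : A n x₀ t₀ r hr p = (x₀ + r • p.1, t₀ + (-(r^2)) • p.2) := rfl
  rw [this]; simp [sub_eq_add_neg]

lemma psi_A {n : ℕ} (x₀ : EuclideanSpace ℝ (Fin n)) (t₀ r : ℝ) (hr : 0 < r)
    (p : EuclideanSpace ℝ (Fin n) × ℝ) (hp : 0 < p.2) :
    psi n x₀ t₀ r (x₀ + r • p.1, t₀ - r^2 * p.2) = ps n p := by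
  unfold psi ps
  simp only [sub_sub_cancel, add_sub_cancel_left, norm_smul, Real.norm_eq_abs, abs_of_pos hr]
  rw [show 4 * π * (r^2 * p.2) = (4 * π * p.2) * r^2 by ring, Real.log_mul (by positivity)
    (by positivity), Real.log_pow]
  field_simp
  push_cast
  ring

lemma A_pre {n : ℕ} (x₀ : EuclideanSpace ℝ (Fin n)) (t₀ r : ℝ) (hr : 0 < r) :
    (A n x₀ t₀ r hr) ⁻¹' (Er n x₀ t₀ r) = B n := by
  ext p
  simp only [mem_preimage, A_apply, Er, B, mem_ofPred_eq]
  have : t₀ - r^2 * p.2 < t₀ ↔ 0 < p.2 := by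
    rw [sub_lt_self_iff]; exact mul_pos_iff_of_pos_left (by positivity)
  rw [this]
  exact and_congr_right fun h => by rw [psi_A x₀ t₀ r hr p h]

lemma A_mem {n : ℕ} (x₀ : EuclideanSpace ℝ (Fin n)) (t₀ r : ℝ) (hr : 0 < r)
    {p : EuclideanSpace ℝ (Fin n) × ℝ} (hp : p ∈ B n) :
    (x₀ + r • p.1, t₀ - r^2 * p.2) ∈ Er n x₀ t₀ r := by
  rw [← A_pre x₀ t₀ r hr, mem_preimage, A_apply] at hp
  exact hp

lemma Er_ex {n : ℕ} (x₀ : EuclideanSpace ℝ (Fin n)) (t₀ r : ℝ) (hr : 0 < r)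
    {p : EuclideanSpace ℝ (Fin n) × ℝ} (hp : p ∈ Er n x₀ t₀ r) :
    ∃ q ∈ B n, p = (x₀ + r • q.1, t₀ - r^2 * q.2) := by
  refine ⟨(A n x₀ t₀ r hr).symm p, ?_, ?_⟩
  · rw [← A_pre x₀ t₀ r hr]; simpa using hp
  · rw [← A_apply x₀ t₀ r hr]; simp

lemma A_map {n : ℕ} (x₀ : EuclideanSpace ℝ (Fin n)) (t₀ r : ℝ) (hr : 0 < r) :
    Measure.map (A n x₀ t₀ r hr) volume
      = ENNReal.ofReal ((r ^ (n+2))⁻¹) • (volume : Measure (EuclideanSpace ℝ (Fin n) × ℝ)) := by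
  have h1 : Measure.map (fun z : EuclideanSpace ℝ (Fin n) => x₀ + r • z) volume
      = ENNReal.ofReal ((r^n)⁻¹) • volume := by
    have : (fun z : EuclideanSpace ℝ (Fin n) => x₀ + r • z) = (fun z => x₀ + z) ∘ (fun z => r • z) := rfl
    rw [this, ← Measure.map_map (by fun_prop) (by fun_prop)]
    have h2 := Measure.map_addHaar_smul (volume : Measure (EuclideanSpace ℝ (Fin n))) hr.ne'
    rw [h2, Measure.map_smul, map_add_left_eq_self]
    simp [abs_of_pos hr]
  have h3 : Measure.map (fun s : ℝ => t₀ - r^2 * s) volume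
      = ENNReal.ofReal ((r^2)⁻¹) • volume := by
    have : (fun s : ℝ => t₀ - r^2 * s) = (fun z => t₀ + z) ∘ (fun z => (-(r^2)) • z) := by
      ext s; simp [sub_eq_add_neg]
    rw [this, ← Measure.map_map (by fun_prop) (by fun_prop)]
    have h2 := Measure.map_addHaar_smul (volume : Measure ℝ) (r := -(r^2)) (by simp [hr.ne'])
    rw [h2, Measure.map_smul, map_add_left_eq_self]
    simp [abs_of_pos hr]
  have h4 : (A n x₀ t₀ r hr : EuclideanSpace ℝ (Fin n) × ℝ → EuclideanSpace ℝ (Fin n) × ℝ)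
      = Prod.map (fun z => x₀ + r • z) (fun s => t₀ - r^2 * s) := by
    ext1 p; rw [A_apply]; rfl
  rw [h4, Measure.volume_eq_prod, ← Measure.map_prod_map _ _ (by fun_prop) (by fun_prop), h1, h3,
    Measure.prod_smul_left, Measure.prod_smul_right, smul_smul, ← ENNReal.ofReal_mul (by positivity),
    pow_add, mul_inv]

lemma CV {n : ℕ} (x₀ : EuclideanSpace ℝ (Fin n)) (t₀ r : ℝ) (hr : 0 < r)
    (g : EuclideanSpace ℝ (Fin n) × ℝ → ℝ) :
    ∫ p in Er n x₀ t₀ r, g p = r^(n+2) * ∫ p in B n, g (x₀ + r • p.1, t₀ - r^2 * p.2) := by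
  have h := setIntegral_map_equiv (μ := volume) (A n x₀ t₀ r hr).toMeasurableEquiv g (Er n x₀ t₀ r)
  simp only [Homeomorph.toMeasurableEquiv_coe] at h
  rw [A_map, A_pre, Measure.restrict_smul, integral_smul_measure] at h
  simp only [A_apply] at h
  rw [← h, ENNReal.toReal_ofReal (by positivity), smul_eq_mul, ← mul_assoc,
    mul_inv_cancel₀ (by positivity), one_mul]

lemma CVi {n : ℕ} (x₀ : EuclideanSpace ℝ (Fin n)) (t₀ r : ℝ) (hr : 0 < r)
    (g : EuclideanSpace ℝ (Fin n) × ℝ → ℝ)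
    (hg : IntegrableOn (fun p => g (x₀ + r • p.1, t₀ - r^2 * p.2)) (B n)) :
    IntegrableOn g (Er n x₀ t₀ r) := by
  have h := integrableOn_map_equiv (μ := volume) (A n x₀ t₀ r hr).toMeasurableEquiv (f := g)
    (s := Er n x₀ t₀ r)
  simp only [Homeomorph.toMeasurableEquiv_coe] at h
  rw [A_map, A_pre, IntegrableOn, Measure.restrict_smul, integrable_smul_measure (by simp; positivity) (by simp)] at h
  rw [IntegrableOn, h]
  have e : (g ∘ (A n x₀ t₀ r hr)) = (fun p => g (x₀ + r • p.1, t₀ - r^2 * p.2)) := by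
    ext1 p; rw [Function.comp_apply, A_apply]
  rw [e]; exact hg

/-- dominating function -/
noncomputable def Dm (n : ℕ) (x₀ : EuclideanSpace ℝ (Fin n)) (t₀ r : ℝ)
    (p : EuclideanSpace ℝ (Fin n) × ℝ) : ℝ :=
  ‖p.1 - x₀‖^2 / (t₀ - p.2)^2 + 1 / (t₀ - p.2) + psi n x₀ t₀ r p + 1

lemma B_dom {n : ℕ} (hn : 1 ≤ n) {p : EuclideanSpace ℝ (Fin n) × ℝ} (hp : p ∈ B n) :
    ‖p.1‖^2 / p.2^2 ≤ 12 * n * p.2 ^ (-(7/6):ℝ) := by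
  have h1 := hp.1
  have h := B_norm hn hp
  rw [div_le_iff₀ (by positivity)]
  have : p.2 ^ (5/6:ℝ) = p.2 ^ (-(7/6):ℝ) * p.2^2 := by
    rw [← Real.rpow_add_natCast h1.ne']; norm_num
  rw [this] at h; linarith

lemma Dm_int {n : ℕ} (hn : 1 ≤ n) (x₀ : EuclideanSpace ℝ (Fin n)) (t₀ r : ℝ) (hr : 0 < r) :
    IntegrableOn (Dm n x₀ t₀ r) (Er n x₀ t₀ r) := by
  apply CVi x₀ t₀ r hr
  have hm : Measurable (fun p : EuclideanSpace ℝ (Fin n) × ℝ =>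
      Dm n x₀ t₀ r (x₀ + r • p.1, t₀ - r^2 * p.2)) := by
    unfold Dm psi; fun_prop
  refine Integrable.mono' ((B_int hn).const_mul (12 * n / r^2 + 1 / r^2 + 3 * n + 1))
    hm.aestronglyMeasurable ?_
  rw [ae_restrict_iff' (B_meas n)]
  refine Eventually.of_forall fun p hp => ?_
  have h1 := hp.1
  have hs := B_s1 hn hp
  have a1 := B_dom hn hp
  have a2 : 1 / p.2 ≤ p.2 ^ (-(7/6):ℝ) := by
    rw [one_div, ← Real.rpow_neg_one]
    exact Real.rpow_le_rpow_of_exponent_ge h1 hs (by norm_num)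
  have a3 := B_ps hn hp
  have a4 : 1 ≤ p.2 ^ (-(7/6):ℝ) := Real.one_le_rpow_of_pos_of_le_one_of_nonpos h1 hs (by norm_num)
  have e : Dm n x₀ t₀ r (x₀ + r • p.1, t₀ - r^2 * p.2)
      = (1/r^2) * (‖p.1‖^2 / p.2^2) + (1/r^2) * (1 / p.2) + ps n p + 1 := by
    unfold Dm
    rw [psi_A x₀ t₀ r hr p h1]
    simp only [sub_sub_cancel, add_sub_cancel_left, norm_smul, Real.norm_eq_abs, abs_of_pos hr]
    field_simp
  have h2 := hp.2
  rw [e, Real.norm_of_nonneg (by positivity)]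
  have b1 := mul_le_mul_of_nonneg_left a1 (show 0 ≤ 1/r^2 by positivity)
  have b2 := mul_le_mul_of_nonneg_left a2 (show 0 ≤ 1/r^2 by positivity)
  have : (12 * n / r^2 + 1 / r^2 + 3 * n + 1) * p.2 ^ (-(7/6):ℝ)
    = 1/r^2 * (12 * n * p.2 ^ (-(7/6):ℝ)) + 1/r^2 * p.2 ^ (-(7/6):ℝ) + 3 * n * p.2 ^ (-(7/6):ℝ) + p.2 ^ (-(7/6):ℝ) := by ring
  rw [this]
  linarith

lemma Er_norm {n : ℕ} (hn : 1 ≤ n) (x₀ : EuclideanSpace ℝ (Fin n)) (t₀ r : ℝ) (hr : 0 < r)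
    {p : EuclideanSpace ℝ (Fin n) × ℝ} (hp : p ∈ Er n x₀ t₀ r) :
    ‖p.1 - x₀‖ ≤ r * √(12 * n) := by
  obtain ⟨q, hq, rfl⟩ := Er_ex x₀ t₀ r hr hp
  simp only [add_sub_cancel_left, norm_smul, Real.norm_eq_abs, abs_of_pos hr]
  gcongr
  exact Real.le_sqrt_of_sq_le (B_norm1 hn hq)

lemma Er_tau {n : ℕ} (hn : 1 ≤ n) (x₀ : EuclideanSpace ℝ (Fin n)) (t₀ r : ℝ) (hr : 0 < r)
    {p : EuclideanSpace ℝ (Fin n) × ℝ} (hp : p ∈ Er n x₀ t₀ r) :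
    4 * π * (t₀ - p.2) ≤ r^2 := by
  obtain ⟨q, hq, rfl⟩ := Er_ex x₀ t₀ r hr hp
  simp only [sub_sub_cancel]
  nlinarith [B_s hn hq, sq_nonneg r]

lemma Er_pos {n : ℕ} (hn : 1 ≤ n) (x₀ : EuclideanSpace ℝ (Fin n)) (t₀ r : ℝ) (hr : 0 < r)
    (hrt : r^2 < 4 * π * t₀)
    {p : EuclideanSpace ℝ (Fin n) × ℝ} (hp : p ∈ Er n x₀ t₀ r) : 0 < p.2 := by
  have := Er_tau hn x₀ t₀ r hr hp
  have h : 0 < 4 * π * p.2 := by linarith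
  exact pos_of_mul_pos_right h (by positivity)

end HB

namespace HB

noncomputable def fk (k : ℕ) (x : ℝ) : ℝ := max x 0 / (max x 0 + 1/((k:ℝ)+1))
noncomputable def Fk (k : ℕ) (x : ℝ) : ℝ := ∫ t in (0:ℝ)..x, fk k t

lemma fk_den (k : ℕ) (x : ℝ) : 0 < max x 0 + 1/((k:ℝ)+1) := by
  have : 0 ≤ max x 0 := le_max_right _ _
  positivity

lemma fk_cont (k : ℕ) : Continuous (fk k) := by
  unfold fk
  exact Continuous.div (by fun_prop) (by fun_prop) fun x => (fk_den k x).ne'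

lemma fk_nonneg (k : ℕ) (x : ℝ) : 0 ≤ fk k x := by
  have : 0 ≤ max x 0 := le_max_right _ _
  unfold fk; positivity

lemma fk_le (k : ℕ) (x : ℝ) : fk k x ≤ 1 := by
  unfold fk
  rw [div_le_one (fk_den k x)]
  have : 0 < 1/((k:ℝ)+1) := by positivity
  linarith

lemma fk_zero (k : ℕ) {x : ℝ} (hx : x ≤ 0) : fk k x = 0 := by
  simp [fk, max_eq_right hx]

lemma fk_tendsto {x : ℝ} (hx : 0 < x) : Tendsto (fun k => fk k x) atTop (nhds 1) := by
  unfold fk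
  simp only [max_eq_left hx.le]
  have h := tendsto_one_div_add_atTop_nhds_zero_nat (𝕜 := ℝ)
  have h2 := (tendsto_const_nhds (x := x)).div (h.const_add x) (by simpa using hx.ne')
  rw [add_zero, div_self hx.ne'] at h2
  exact h2

lemma Fk_deriv (k : ℕ) (x : ℝ) : HasDerivAt (Fk k) (fk k x) x :=
  intervalIntegral.integral_hasDerivAt_right ((fk_cont k).intervalIntegrable _ _)
    ((fk_cont k).stronglyMeasurableAtFilter _ _) (fk_cont k).continuousAt

lemma Fk_cont (k : ℕ) : Continuous (Fk k) :=
  continuous_iff_continuousAt.2 fun x => (Fk_deriv k x).continuousAt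

lemma Fk_zero (k : ℕ) {x : ℝ} (hx : x ≤ 0) : Fk k x = 0 := by
  unfold Fk
  rw [intervalIntegral.integral_symm, intervalIntegral.integral_congr (g := fun _ => 0)]
  · simp
  · intro t ht
    rw [uIcc_of_le hx] at ht
    exact fk_zero k ht.2

lemma Fk_nonneg (k : ℕ) (x : ℝ) : 0 ≤ Fk k x := by
  rcases le_total x 0 with hx | hx
  · rw [Fk_zero k hx]
  · exact intervalIntegral.integral_nonneg hx fun t _ => fk_nonneg k t

lemma Fk_le (k : ℕ) {x : ℝ} (hx : 0 ≤ x) : Fk k x ≤ x := by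
  have := intervalIntegral.integral_mono_on (μ := volume) hx ((fk_cont k).intervalIntegrable 0 x)
    ((continuous_const (y := (1:ℝ))).intervalIntegrable 0 x) (fun t _ => fk_le k t)
  simpa [Fk] using this

lemma Fk_tendsto {x : ℝ} (hx : 0 ≤ x) : Tendsto (fun k => Fk k x) atTop (nhds x) := by
  unfold Fk
  have h : Tendsto (fun k : ℕ => ∫ t in (0:ℝ)..x, fk k t) atTop (nhds (∫ t in (0:ℝ)..x, (1:ℝ))) := by
    apply intervalIntegral.tendsto_integral_filter_of_dominated_convergence (fun _ => 1)
    · exact Eventually.of_forall fun k => (fk_cont k).aestronglyMeasurable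
    · refine Eventually.of_forall fun k => Eventually.of_forall fun t _ => ?_
      rw [Real.norm_of_nonneg (fk_nonneg k t)]; exact fk_le k t
    · exact continuous_const.intervalIntegrable _ _
    · refine Eventually.of_forall fun t ht => ?_
      rw [uIoc_of_le hx] at ht
      exact fk_tendsto ht.1
  simpa using h

lemma psi_fderiv {n : ℕ} (x₀ : EuclideanSpace ℝ (Fin n)) {t₀ r t : ℝ} (ht : t < t₀)
    (y : EuclideanSpace ℝ (Fin n)) :
    HasFDerivAt (fun z => psi n x₀ t₀ r (z, t)) (-(1/(2 * (t₀ - t))) • innerSL ℝ (y - x₀)) y := by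
  have ht' : t₀ - t ≠ 0 := by linarith
  have h1 : HasFDerivAt (fun z : EuclideanSpace ℝ (Fin n) => ‖z - x₀‖^2)
      (2 • innerSL ℝ (y - x₀)) y := by
    simpa using ((hasFDerivAt_id y).sub_const x₀).norm_sq
  have h2 := ((h1.mul_const (1 / (4 * (t₀ - t)))).const_sub
    (-((n:ℝ)/2) * Real.log (4 * π * (t₀ - t)))).add_const (n * Real.log r)
  refine (h2.congr_fderiv ?_).congr_of_eventuallyEq (Eventually.of_forall fun z => ?_)
  · rw [← Nat.cast_smul_eq_nsmul ℝ, smul_smul, ← neg_smul]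
    congr 1
    field_simp
    norm_num
  · simp only [psi]; ring

lemma psi_deriv {n : ℕ} (x₀ : EuclideanSpace ℝ (Fin n)) {t₀ r t : ℝ} (ht : t < t₀)
    (y : EuclideanSpace ℝ (Fin n)) :
    HasDerivAt (fun s => psi n x₀ t₀ r (y, s))
      (n / (2 * (t₀ - t)) - ‖y - x₀‖^2 / (4 * (t₀ - t)^2)) t := by
  have ht' : 0 < t₀ - t := by linarith
  have h0 : HasDerivAt (fun s : ℝ => t₀ - s) (-1) t := by
    simpa using (hasDerivAt_id t).const_sub t₀
  have h1 := (((h0.const_mul (4 * π)).log (by positivity)).const_mul (-((n:ℝ)/2)))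
  have h2 := ((hasDerivAt_const t (‖y - x₀‖^2)).div (h0.const_mul 4) (by positivity))
  have h3 := (h1.sub h2).add_const (n * Real.log r)
  refine (h3.congr_deriv ?_).congr_of_eventuallyEq (Eventually.of_forall fun z => rfl)
  field_simp
  ring

lemma psi_contOn {n : ℕ} (x₀ : EuclideanSpace ℝ (Fin n)) (t₀ r : ℝ) :
    ContinuousOn (psi n x₀ t₀ r) {p | p.2 < t₀} := by
  intro p hp
  have hp' : 0 < t₀ - p.2 := sub_pos.2 hp
  unfold psi
  apply ContinuousAt.continuousWithinAt
  refine ContinuousAt.add (ContinuousAt.sub (ContinuousAt.mul (by fun_prop)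
    (ContinuousAt.log (by fun_prop) (by positivity))) (ContinuousAt.div (by fun_prop) (by fun_prop) (by positivity))) (by fun_prop)

lemma ibp_space {n : ℕ} (hn : 1 ≤ n) (x₀ : EuclideanSpace ℝ (Fin n)) {t₀ r t : ℝ} (hr : 0 < r)
    (ht : t < t₀) (k : ℕ) (v : EuclideanSpace ℝ (Fin n)) (g : EuclideanSpace ℝ (Fin n) → ℝ)
    (g' : EuclideanSpace ℝ (Fin n) → EuclideanSpace ℝ (Fin n) →L[ℝ] ℝ)
    (hg : ∀ y, HasFDerivAt g (g' y) y) (gv : EuclideanSpace ℝ (Fin n) → ℝ)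
    (hgv : ∀ y, g' y v = gv y) (hc : Continuous gv) :
    Integrable (fun y => Fk k (psi n x₀ t₀ r (y, t)) * gv y) ∧
    Integrable (fun y => fk k (psi n x₀ t₀ r (y, t)) * (inner ℝ (y - x₀) v / (2 * (t₀ - t))) * g y) ∧
    ∫ y, Fk k (psi n x₀ t₀ r (y, t)) * gv y
      = ∫ y, fk k (psi n x₀ t₀ r (y, t)) * (inner ℝ (y - x₀) v / (2 * (t₀ - t))) * g y := by
  have hψc : Continuous fun y => psi n x₀ t₀ r (y, t) :=
    continuous_iff_continuousAt.2 fun y => (psi_fderiv x₀ ht y).continuousAt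
  have hgc : Continuous g := continuous_iff_continuousAt.2 fun y => (hg y).continuousAt
  have hφ : ∀ y, HasFDerivAt (fun z => Fk k (psi n x₀ t₀ r (z, t)))
      (fk k (psi n x₀ t₀ r (y, t)) • (-(1/(2 * (t₀ - t))) • innerSL ℝ (y - x₀))) y := fun y =>
    (Fk_deriv k _).comp_hasFDerivAt y (psi_fderiv x₀ ht y)
  have hout : ∀ y ∉ Metric.closedBall x₀ (r * √(12 * n)), psi n x₀ t₀ r (y, t) ≤ 0 := by
    intro y hy
    by_contra! h
    apply hy
    rw [Metric.mem_closedBall, dist_eq_norm]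
    exact Er_norm hn x₀ t₀ r hr (p := (y, t)) ⟨ht, h.le⟩
  have hK := isCompact_closedBall x₀ (r * √(12 * n))
  have F1 := Fk_cont k
  have F2 := fk_cont k
  have i1 : Integrable (fun y => Fk k (psi n x₀ t₀ r (y, t)) * gv y) :=
    Continuous.integrable_of_hasCompactSupport (by fun_prop)
      (HasCompactSupport.intro hK fun y hy => by simp [Fk_zero k (hout y hy)])
  have i2 : Integrable (fun y => fk k (psi n x₀ t₀ r (y, t)) *
      (inner ℝ (y - x₀) v / (2 * (t₀ - t))) * g y) :=
    Continuous.integrable_of_hasCompactSupport (by fun_prop)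
      (HasCompactSupport.intro hK fun y hy => by simp [fk_zero k (hout y hy)])
  have i3 : Integrable (fun y => Fk k (psi n x₀ t₀ r (y, t)) * g y) :=
    Continuous.integrable_of_hasCompactSupport (by fun_prop)
      (HasCompactSupport.intro hK fun y hy => by simp [Fk_zero k (hout y hy)])
  refine ⟨i1, i2, ?_⟩
  have e1 : ∀ y, fderiv ℝ (fun z => Fk k (psi n x₀ t₀ r (z, t))) y v * g y
      = -(fk k (psi n x₀ t₀ r (y, t)) * (inner ℝ (y - x₀) v / (2 * (t₀ - t))) * g y) := by
    intro y
    rw [(hφ y).fderiv]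
    simp only [smul_apply, innerSL_apply_apply, smul_eq_mul]
    ring
  have e2 : ∀ y, fderiv ℝ g y v = gv y := fun y => by rw [(hg y).fderiv, hgv]
  have := integral_mul_fderiv_eq_neg_fderiv_mul_of_integrable (μ := volume) (𝕜 := ℝ) (v := v)
    (f := fun y => Fk k (psi n x₀ t₀ r (y, t))) (g := g)
    (by simp only [e1]; exact i2.neg) (by simp only [e2]; exact i1) i3
    (fun y _ => (hφ y).differentiableAt) (fun y _ => (hg y).differentiableAt)
  simp only [e1, e2, integral_neg, neg_neg] at this
  exact this

lemma slice_time {n : ℕ} (hn : 1 ≤ n) (x₀ : EuclideanSpace ℝ (Fin n)) {t₀ r : ℝ} (hr : 0 < r)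
    (hrt : r^2 < 4 * π * t₀) {y : EuclideanSpace ℝ (Fin n)} (hy : y ≠ x₀) :
    ∃ a b, 0 < a ∧ a ≤ b ∧ b < t₀ ∧ ∀ t, (y, t) ∈ Er n x₀ t₀ r → a < t ∧ t < b := by
  have hw : 0 < ‖y - x₀‖ := norm_pos_iff.2 (sub_ne_zero.2 hy)
  have hn' : (1:ℝ) ≤ n := by exact_mod_cast hn
  set δ : ℝ := r^2 * (‖y - x₀‖^2 / (r^2 * (12 * n))) ^ (6/5:ℝ) with hδ
  have hδ0 : 0 < δ := by positivity
  have h4 : r^2 / (4 * π) < t₀ := by rw [div_lt_iff₀ (by positivity)]; linarith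
  have h5 : 0 < r^2 / (4 * π) := by positivity
  refine ⟨(t₀ - r^2 / (4 * π))/2, max ((t₀ - r^2 / (4 * π))/2) (t₀ - δ/2), by linarith,
    le_max_left _ _, max_lt (by linarith) (by linarith), ?_⟩
  intro t ht
  have h6 := Er_tau hn x₀ t₀ r hr ht
  have h7 : t₀ - t ≤ r^2 / (4 * π) := by rw [le_div_iff₀ (by positivity)]; linarith
  refine ⟨by linarith, lt_max_of_lt_right ?_⟩
  obtain ⟨q, hq, he⟩ := Er_ex x₀ t₀ r hr ht
  have hq0 := hq.1
  have h8 : ‖y - x₀‖^2 = r^2 * ‖q.1‖^2 := by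
    rw [show y = x₀ + r • q.1 from (Prod.ext_iff.1 he).1]
    simp [norm_smul, mul_pow]
  have h9 : t = t₀ - r^2 * q.2 := (Prod.ext_iff.1 he).2
  have h10 := B_norm hn hq
  have h11 : ‖y - x₀‖^2 / (r^2 * (12 * n)) ≤ q.2 ^ (5/6:ℝ) := by
    rw [h8, div_le_iff₀ (by positivity)]
    nlinarith [sq_nonneg r]
  have h12 : (‖y - x₀‖^2 / (r^2 * (12 * n))) ^ (6/5:ℝ) ≤ q.2 := by
    calc _ ≤ (q.2 ^ (5/6:ℝ)) ^ (6/5:ℝ) := by gcongr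
      _ = q.2 := by rw [← Real.rpow_mul hq0.le]; norm_num
  have : δ ≤ r^2 * q.2 := by rw [hδ]; gcongr
  linarith

lemma ibp_time {n : ℕ} (hn : 1 ≤ n) (x₀ : EuclideanSpace ℝ (Fin n)) {t₀ r : ℝ} (hr : 0 < r)
    (hrt : r^2 < 4 * π * t₀) {y : EuclideanSpace ℝ (Fin n)} (hy : y ≠ x₀) (k : ℕ)
    (g g' : ℝ → ℝ) (hg : ∀ t ∈ Ioo 0 t₀, HasDerivAt g (g' t) t) (hc : ContinuousOn g' (Ioo 0 t₀)) :
    ∫ t in Ioo 0 t₀, Fk k (psi n x₀ t₀ r (y, t)) * g' t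
      = - ∫ t in Ioo 0 t₀, fk k (psi n x₀ t₀ r (y, t)) *
        (n / (2 * (t₀ - t)) - ‖y - x₀‖^2 / (4 * (t₀ - t)^2)) * g t := by
  obtain ⟨a, b, ha, hab, hb, hs⟩ := slice_time hn x₀ hr hrt hy
  have hsub : Icc a b ⊆ Ioo 0 t₀ := fun t ht => ⟨ha.trans_le ht.1, ht.2.trans_lt hb⟩
  have hsub' : Ioc a b ⊆ Ioo 0 t₀ := Ioc_subset_Icc_self.trans hsub
  have hout : ∀ t < t₀, ¬ (a < t ∧ t < b) → psi n x₀ t₀ r (y, t) ≤ 0 := by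
    intro t ht h
    by_contra! h'
    exact h (hs t ⟨ht, h'.le⟩)
  have red : ∀ u : ℝ → ℝ, (∀ t < t₀, psi n x₀ t₀ r (y, t) ≤ 0 → u t = 0) →
      ∫ t in Ioo 0 t₀, u t = ∫ t in a..b, u t := by
    intro u hu
    rw [intervalIntegral.integral_of_le hab]
    refine setIntegral_eq_of_subset_of_forall_sdiff_eq_zero measurableSet_Ioo hsub' ?_
    intro t ht
    apply hu t ht.1.2 (hout t ht.1.2 fun h => ht.2 ⟨h.1, h.2.le⟩)
  rw [red, red]
  · have hu : ∀ t ∈ uIcc a b, HasDerivAt (fun s => Fk k (psi n x₀ t₀ r (y, s)))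
        (fk k (psi n x₀ t₀ r (y, t)) * (n / (2 * (t₀ - t)) - ‖y - x₀‖^2 / (4 * (t₀ - t)^2))) t := by
      intro t ht
      rw [uIcc_of_le hab] at ht
      exact (Fk_deriv k _).comp t (psi_deriv x₀ (ht.2.trans_lt hb) y)
    have hψ : ContinuousOn (fun t => psi n x₀ t₀ r (y, t)) (Icc a b) :=
      (psi_contOn x₀ t₀ r).comp (by fun_prop) fun t ht => ht.2.trans_lt hb
    have := intervalIntegral.integral_mul_deriv_eq_deriv_mul hu
      (v := g) (v' := g') (fun t ht => hg t (hsub (by rwa [uIcc_of_le hab] at ht))) ?_ ?_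
    · rw [this, Fk_zero k (hout a (hab.trans_lt hb) (by simp)), Fk_zero k (hout b hb (by simp))]
      simp
    · apply ContinuousOn.intervalIntegrable
      rw [uIcc_of_le hab]
      refine ((fk_cont k).comp_continuousOn hψ).mul (ContinuousOn.sub (ContinuousOn.div (by fun_prop) (by fun_prop) ?_)
        (ContinuousOn.div (by fun_prop) (by fun_prop) ?_)) <;>
      · intro t ht
        have : 0 < t₀ - t := by linarith [ht.2]
        positivity
    · apply ContinuousOn.intervalIntegrable
      rw [uIcc_of_le hab]
      exact hc.mono hsub
  · intro t _ h; simp [fk_zero k h]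
  · intro t _ h; simp [Fk_zero k h]

end HB

namespace HB

lemma eq_of_slice_t {n : ℕ} {S : Set (EuclideanSpace ℝ (Fin n) × ℝ)} (hS : MeasurableSet S)
    {g₁ g₂ : EuclideanSpace ℝ (Fin n) × ℝ → ℝ} (h₁ : IntegrableOn g₁ S) (h₂ : IntegrableOn g₂ S)
    (h : ∀ t, ∫ y, S.indicator g₁ (y, t) = ∫ y, S.indicator g₂ (y, t)) :
    ∫ p in S, g₁ p = ∫ p in S, g₂ p := by
  rw [← integral_indicator hS, ← integral_indicator hS, Measure.volume_eq_prod,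
    integral_prod_symm, integral_prod_symm]
  · simp only [h]
  · rw [← Measure.volume_eq_prod, integrable_indicator_iff hS]; exact h₂
  · rw [← Measure.volume_eq_prod, integrable_indicator_iff hS]; exact h₁

lemma eq_of_slice_y {n : ℕ} {S : Set (EuclideanSpace ℝ (Fin n) × ℝ)} (hS : MeasurableSet S)
    {g₁ g₂ : EuclideanSpace ℝ (Fin n) × ℝ → ℝ} (h₁ : IntegrableOn g₁ S) (h₂ : IntegrableOn g₂ S)
    (h : ∀ᵐ y, ∫ t, S.indicator g₁ (y, t) = ∫ t, S.indicator g₂ (y, t)) :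
    ∫ p in S, g₁ p = ∫ p in S, g₂ p := by
  rw [← integral_indicator hS, ← integral_indicator hS, Measure.volume_eq_prod,
    integral_prod, integral_prod]
  · exact integral_congr_ae h
  · rw [← Measure.volume_eq_prod, integrable_indicator_iff hS]; exact h₂
  · rw [← Measure.volume_eq_prod, integrable_indicator_iff hS]; exact h₁

lemma int_mul {n : ℕ} (hn : 1 ≤ n) (x₀ : EuclideanSpace ℝ (Fin n)) {t₀ r : ℝ} (hr : 0 < r)
    {u v : EuclideanSpace ℝ (Fin n) × ℝ → ℝ} (hu : ContinuousOn u (Er n x₀ t₀ r))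
    (hv : ContinuousOn v (Er n x₀ t₀ r)) (C : ℝ)
    (hub : ∀ p ∈ Er n x₀ t₀ r, |u p| ≤ Dm n x₀ t₀ r p)
    (hvb : ∀ p ∈ Er n x₀ t₀ r, |v p| ≤ C) :
    IntegrableOn (fun p => u p * v p) (Er n x₀ t₀ r) := by
  refine Integrable.mono' ((Dm_int hn x₀ t₀ r hr).mul_const C)
    ((hu.mul hv).aestronglyMeasurable (Er_meas n x₀ t₀ r)) ?_
  rw [ae_restrict_iff' (Er_meas n x₀ t₀ r)]
  refine Eventually.of_forall fun p hp => ?_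
  rw [Real.norm_eq_abs, abs_mul]
  have := hub p hp
  exact mul_le_mul this (hvb p hp) (abs_nonneg _) ((abs_nonneg _).trans this)

lemma sum_single {n : ℕ} (w : EuclideanSpace ℝ (Fin n)) (L : EuclideanSpace ℝ (Fin n) →L[ℝ] ℝ) :
    ∑ i, inner ℝ w (EuclideanSpace.single i (1:ℝ)) * L (EuclideanSpace.single i 1) = L w := by
  have h := (EuclideanSpace.basisFun (Fin n) ℝ).sum_repr w
  conv_rhs => rw [← h]
  rw [map_sum]
  refine Finset.sum_congr rfl fun i _ => ?_
  simp [EuclideanSpace.inner_single_right]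

lemma Er_psi_null {n : ℕ} (hn : 1 ≤ n) (x₀ : EuclideanSpace ℝ (Fin n)) (t₀ r : ℝ) :
    ∀ᵐ p, p ∈ Er n x₀ t₀ r → 0 < psi n x₀ t₀ r p := by
  have hm : MeasurableSet {p : EuclideanSpace ℝ (Fin n) × ℝ | p.2 < t₀ ∧ psi n x₀ t₀ r p = 0} :=
    (measurableSet_lt measurable_snd measurable_const).inter
      (measurableSet_eq_fun (psi_meas n x₀ t₀ r) measurable_const)
  have h0 : volume {p : EuclideanSpace ℝ (Fin n) × ℝ | p.2 < t₀ ∧ psi n x₀ t₀ r p = 0} = 0 := by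
    rw [Measure.volume_eq_prod, Measure.prod_apply_symm hm]
    rw [lintegral_eq_zero_iff' (measurable_measure_prodMk_right hm).aemeasurable]
    refine Eventually.of_forall fun t => ?_
    by_cases ht : t < t₀
    · have : Nonempty (Fin n) := ⟨⟨0, hn⟩⟩
      have ht' : 0 < t₀ - t := by linarith
      refine measure_mono_null (t := Metric.sphere x₀ (√((4 * (t₀ - t)) *
        (-((n:ℝ)/2) * Real.log (4 * π * (t₀ - t)) + n * Real.log r)))) ?_
        (Measure.addHaar_sphere _ _ _)
      intro y hy
      have h1 : psi n x₀ t₀ r (y, t) = 0 := hy.2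
      unfold psi at h1
      rw [mem_sphere_iff_norm]
      have h2 : (4 * (t₀ - t)) * (-((n:ℝ)/2) * Real.log (4 * π * (t₀ - t)) + n * Real.log r)
          = ‖y - x₀‖^2 := by
        have h3 : -((n:ℝ)/2) * Real.log (4 * π * (t₀ - t)) + n * Real.log r
          = ‖y - x₀‖^2 / (4 * (t₀ - t)) := by linarith
        rw [h3]; field_simp
      rw [h2, Real.sqrt_sq (norm_nonneg _)]
    · refine measure_mono_null (t := ∅) ?_ measure_empty
      intro y hy
      exact absurd hy.1 ht
  rw [measure_eq_zero_iff_ae_notMem] at h0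
  filter_upwards [h0] with p hp hE
  exact lt_of_le_of_ne hE.2 fun h => hp ⟨hE.1, h.symm⟩

end HB

namespace HB

lemma ind_Er {n : ℕ} (x₀ : EuclideanSpace ℝ (Fin n)) {t₀ r : ℝ}
    (u : EuclideanSpace ℝ (Fin n) × ℝ → ℝ) (y : EuclideanSpace ℝ (Fin n)) (t : ℝ) (ht : t < t₀)
    (hu : psi n x₀ t₀ r (y, t) ≤ 0 → u (y, t) = 0) :
    (Er n x₀ t₀ r).indicator u (y, t) = u (y, t) := by
  by_cases h : (y, t) ∈ Er n x₀ t₀ r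
  · rw [indicator_of_mem h]
  · rw [indicator_of_notMem h]
    refine (hu ?_).symm
    by_contra! h'
    exact h ⟨ht, h'.le⟩

lemma ind0_Er {n : ℕ} (hn : 1 ≤ n) (x₀ : EuclideanSpace ℝ (Fin n)) {t₀ r : ℝ} (hr : 0 < r)
    (hrt : r^2 < 4 * π * t₀)
    (u : EuclideanSpace ℝ (Fin n) × ℝ → ℝ) (y : EuclideanSpace ℝ (Fin n)) (t : ℝ)
    (ht : t ∉ Ioo 0 t₀) : (Er n x₀ t₀ r).indicator u (y, t) = 0 :=
  indicator_of_notMem (fun h => ht ⟨Er_pos hn x₀ t₀ r hr hrt h, h.1⟩) _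

lemma sD1 {n : ℕ} {t₀ : ℝ}
    (D1 : EuclideanSpace ℝ (Fin n) × ℝ → (EuclideanSpace ℝ (Fin n) × ℝ) →L[ℝ] ℝ)
    (D2 : EuclideanSpace ℝ (Fin n) × ℝ → (EuclideanSpace ℝ (Fin n) × ℝ) →L[ℝ]
      (EuclideanSpace ℝ (Fin n) × ℝ) →L[ℝ] ℝ)
    (hD2 : ∀ p, 0 < p.2 → p.2 < t₀ → HasFDerivAt D1 (D2 p) p)
    (y : EuclideanSpace ℝ (Fin n)) (t : ℝ) (ht : t ∈ Ioo 0 t₀) (v : EuclideanSpace ℝ (Fin n) × ℝ) :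
      HasFDerivAt (fun z => D1 (z, t) v)
        (((D2 (y, t)).flip v).comp (ContinuousLinearMap.inl ℝ _ ℝ)) y := by
    have h1 := (hD2 (y, t) ht.1 ht.2).comp y (hasFDerivAt_prodMk_left (𝕜 := ℝ) y t)
    have h2 := ((ContinuousLinearMap.apply ℝ ℝ v).hasFDerivAt.comp y h1)
    exact h2

lemma sD1t {n : ℕ} {t₀ : ℝ}
    (D1 : EuclideanSpace ℝ (Fin n) × ℝ → (EuclideanSpace ℝ (Fin n) × ℝ) →L[ℝ] ℝ)
    (D2 : EuclideanSpace ℝ (Fin n) × ℝ → (EuclideanSpace ℝ (Fin n) × ℝ) →L[ℝ]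
      (EuclideanSpace ℝ (Fin n) × ℝ) →L[ℝ] ℝ)
    (hD2 : ∀ p, 0 < p.2 → p.2 < t₀ → HasFDerivAt D1 (D2 p) p)
    (y : EuclideanSpace ℝ (Fin n)) (t : ℝ) (ht : t ∈ Ioo 0 t₀) (v : EuclideanSpace ℝ (Fin n) × ℝ) :
      HasDerivAt (fun s => D1 (y, s) v) (D2 (y, t) (0, 1) v) t := by
    have h1 := (hD2 (y, t) ht.1 ht.2).comp t (hasFDerivAt_prodMk_right (𝕜 := ℝ) y t)
    have h2 := ((ContinuousLinearMap.apply ℝ ℝ v).hasFDerivAt.comp t h1)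
    exact h2.hasDerivAt

set_option maxHeartbeats 1600000 in
lemma hA {n : ℕ} (hn : 1 ≤ n) (x₀ : EuclideanSpace ℝ (Fin n)) {t₀ r : ℝ} (hr : 0 < r)
    (hrt : r^2 < 4 * π * t₀) (k : ℕ)
    (D1 : EuclideanSpace ℝ (Fin n) × ℝ → (EuclideanSpace ℝ (Fin n) × ℝ) →L[ℝ] ℝ)
    (D2 : EuclideanSpace ℝ (Fin n) × ℝ → (EuclideanSpace ℝ (Fin n) × ℝ) →L[ℝ]
      (EuclideanSpace ℝ (Fin n) × ℝ) →L[ℝ] ℝ)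
    (hD2 : ∀ p, 0 < p.2 → p.2 < t₀ → HasFDerivAt D1 (D2 p) p)
    (hc2 : ContinuousOn D2 (univ ×ˢ Ioo 0 t₀))
    (ia1 : IntegrableOn (fun p => Fk k (psi n x₀ t₀ r p) * (∑ i, D2 p (EuclideanSpace.single i 1, 0) (EuclideanSpace.single i 1, 0))) (Er n x₀ t₀ r))
    (ia2 : IntegrableOn (fun p => fk k (psi n x₀ t₀ r p) / (2 * (t₀ - p.2)) * D1 p (p.1 - x₀, 0)) (Er n x₀ t₀ r)) :
    ∫ p in Er n x₀ t₀ r, Fk k (psi n x₀ t₀ r p) *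
        (∑ i, D2 p (EuclideanSpace.single i 1, 0) (EuclideanSpace.single i 1, 0))
      = ∫ p in Er n x₀ t₀ r, fk k (psi n x₀ t₀ r p) / (2 * (t₀ - p.2)) * D1 p (p.1 - x₀, 0) := by
  classical
  have hSm : MeasurableSet (Er n x₀ t₀ r) := Er_meas n x₀ t₀ r
  have hc1 : ContinuousOn D1 (univ ×ˢ Ioo 0 t₀) := fun p hp =>
    (hD2 p hp.2.1 hp.2.2).continuousAt.continuousWithinAt
  have sc2 : ∀ t ∈ Ioo 0 t₀, Continuous fun y : EuclideanSpace ℝ (Fin n) => D2 (y, t) := by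
    intro t ht
    exact hc2.comp_continuous (by fun_prop) fun y => ⟨mem_univ _, ht⟩
  have sc1 : ∀ t ∈ Ioo 0 t₀, Continuous fun y : EuclideanSpace ℝ (Fin n) => D1 (y, t) := by
    intro t ht
    exact hc1.comp_continuous (by fun_prop) fun y => ⟨mem_univ _, ht⟩
  refine eq_of_slice_t hSm ia1 ia2 fun t => ?_
  by_cases ht : t ∈ Ioo 0 t₀
  · have e := fun i : Fin n => ibp_space hn x₀ hr ht.2 k (EuclideanSpace.single i 1)
      (fun z => D1 (z, t) (EuclideanSpace.single i 1, 0)) _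
      (fun y => sD1 D1 D2 hD2 y t ht _)
      (fun y => D2 (y, t) (EuclideanSpace.single i 1, 0) (EuclideanSpace.single i 1, 0)) (fun y => rfl)
      (((sc2 t ht).clm_apply continuous_const).clm_apply continuous_const)
    rw [integral_congr_ae (Eventually.of_forall fun y => ind_Er x₀ _ y t ht.2 fun h => by simp [Fk_zero k h]),
      integral_congr_ae (Eventually.of_forall fun y => ind_Er x₀ _ y t ht.2 fun h => by simp [fk_zero k h])]
    have e1 : ∀ y, Fk k (psi n x₀ t₀ r (y, t)) *
      (∑ i, D2 (y, t) (EuclideanSpace.single i 1, 0) (EuclideanSpace.single i 1, 0))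
       = ∑ i, Fk k (psi n x₀ t₀ r (y, t)) * D2 (y, t) (EuclideanSpace.single i 1, 0) (EuclideanSpace.single i 1, 0) := by
      intro y; rw [Finset.mul_sum]
    have e2 : ∀ y, fk k (psi n x₀ t₀ r (y, t)) / (2 * (t₀ - t)) * D1 (y, t) (y - x₀, 0)
       = ∑ i, fk k (psi n x₀ t₀ r (y, t)) * (inner ℝ (y - x₀) (EuclideanSpace.single i 1) / (2 * (t₀ - t)))
        * D1 (y, t) (EuclideanSpace.single i 1, 0) := by
      intro y
      have := sum_single (y - x₀) ((D1 (y, t)).comp (ContinuousLinearMap.inl ℝ _ ℝ))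
      simp only [ContinuousLinearMap.comp_apply, ContinuousLinearMap.inl_apply] at this
      rw [← this, Finset.mul_sum]
      refine Finset.sum_congr rfl fun i _ => ?_
      ring
    simp only [e1, e2]
    rw [integral_finsetSum _ fun i _ => (e i).1, integral_finsetSum _ fun i _ => (e i).2.1]
    exact Finset.sum_congr rfl fun i _ => (e i).2.2
  · simp [ind0_Er hn x₀ hr hrt _ _ t ht]

set_option maxHeartbeats 1600000 in
lemma hB {n : ℕ} (hn : 1 ≤ n) (x₀ : EuclideanSpace ℝ (Fin n)) {t₀ r : ℝ} (hr : 0 < r)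
    (hrt : r^2 < 4 * π * t₀) (k : ℕ)
    (D1 : EuclideanSpace ℝ (Fin n) × ℝ → (EuclideanSpace ℝ (Fin n) × ℝ) →L[ℝ] ℝ)
    (D2 : EuclideanSpace ℝ (Fin n) × ℝ → (EuclideanSpace ℝ (Fin n) × ℝ) →L[ℝ]
      (EuclideanSpace ℝ (Fin n) × ℝ) →L[ℝ] ℝ)
    (hD2 : ∀ p, 0 < p.2 → p.2 < t₀ → HasFDerivAt D1 (D2 p) p)
    (hc2 : ContinuousOn D2 (univ ×ˢ Ioo 0 t₀))
    (ib1 : IntegrableOn (fun p => Fk k (psi n x₀ t₀ r p) * D1 p (0, 1)) (Er n x₀ t₀ r))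
    (ib2 : IntegrableOn (fun p => Fk k (psi n x₀ t₀ r p) * D2 p (p.1 - x₀, 0) (0, 1)) (Er n x₀ t₀ r))
    (ib3 : IntegrableOn (fun p => fk k (psi n x₀ t₀ r p) / (2 * (t₀ - p.2)) * (‖p.1 - x₀‖^2 * D1 p (0, 1))) (Er n x₀ t₀ r)) :
    ∫ p in Er n x₀ t₀ r, (n * (Fk k (psi n x₀ t₀ r p) * D1 p (0, 1)) +
        Fk k (psi n x₀ t₀ r p) * D2 p (p.1 - x₀, 0) (0, 1))
      = ∫ p in Er n x₀ t₀ r, fk k (psi n x₀ t₀ r p) / (2 * (t₀ - p.2)) * (‖p.1 - x₀‖^2 * D1 p (0, 1)) := by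
  classical
  have hSm : MeasurableSet (Er n x₀ t₀ r) := Er_meas n x₀ t₀ r
  have hc1 : ContinuousOn D1 (univ ×ˢ Ioo 0 t₀) := fun p hp =>
    (hD2 p hp.2.1 hp.2.2).continuousAt.continuousWithinAt
  have sc2 : ∀ t ∈ Ioo 0 t₀, Continuous fun y : EuclideanSpace ℝ (Fin n) => D2 (y, t) := by
    intro t ht
    exact hc2.comp_continuous (by fun_prop) fun y => ⟨mem_univ _, ht⟩
  have sc1 : ∀ t ∈ Ioo 0 t₀, Continuous fun y : EuclideanSpace ℝ (Fin n) => D1 (y, t) := by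
    intro t ht
    exact hc1.comp_continuous (by fun_prop) fun y => ⟨mem_univ _, ht⟩
  refine eq_of_slice_t hSm ((ib1.const_mul _).add ib2) ib3 fun t => ?_
  by_cases ht : t ∈ Ioo 0 t₀
  · have dl : ∀ (i : Fin n) (y : EuclideanSpace ℝ (Fin n)), HasFDerivAt
        (fun z => inner ℝ (EuclideanSpace.single i (1:ℝ)) (z - x₀))
        (innerSL ℝ (EuclideanSpace.single i (1:ℝ))) y := by
      intro i y
      exact (innerSL ℝ (EuclideanSpace.single i (1:ℝ))).hasFDerivAt.comp y
        ((hasFDerivAt_id y).sub_const x₀)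
    have e := fun i : Fin n => ibp_space hn x₀ hr ht.2 k (EuclideanSpace.single i 1)
      (fun z => inner ℝ (EuclideanSpace.single i (1:ℝ)) (z - x₀) * D1 (z, t) (0, 1)) _
      (fun y => (dl i y).mul (sD1 D1 D2 hD2 y t ht (0, 1)))
      (fun y => inner ℝ (EuclideanSpace.single i (1:ℝ)) (y - x₀) * D2 (y, t) (EuclideanSpace.single i 1, 0) (0, 1)
          + D1 (y, t) (0, 1))
        (fun y => by simp)
        (Continuous.add (Continuous.mul (by fun_prop)
          (((sc2 t ht).clm_apply continuous_const).clm_apply continuous_const))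
          ((sc1 t ht).clm_apply continuous_const))
    rw [integral_congr_ae (Eventually.of_forall fun y => ind_Er x₀ _ y t ht.2 fun h => by simp [Fk_zero k h]),
      integral_congr_ae (Eventually.of_forall fun y => ind_Er x₀ _ y t ht.2 fun h => by simp [fk_zero k h])]
    have e1 : ∀ y, n * (Fk k (psi n x₀ t₀ r (y, t)) * D1 (y, t) (0, 1)) +
      Fk k (psi n x₀ t₀ r (y, t)) * D2 (y, t) (y - x₀, 0) (0, 1)
       = ∑ i : Fin n, Fk k (psi n x₀ t₀ r (y, t)) *
          (inner ℝ (EuclideanSpace.single i (1:ℝ)) (y - x₀) * D2 (y, t) (EuclideanSpace.single i 1, 0) (0, 1)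
          + D1 (y, t) (0, 1)) := by
      intro y
      have := sum_single (y - x₀) (((D2 (y, t)).flip (0, 1)).comp (ContinuousLinearMap.inl ℝ _ ℝ))
      simp only [ContinuousLinearMap.comp_apply, ContinuousLinearMap.inl_apply, ContinuousLinearMap.flip_apply] at this
      rw [← Finset.mul_sum, Finset.sum_add_distrib, ← this]
      simp only [real_inner_comm (y - x₀), Finset.sum_const, Finset.card_univ, Fintype.card_fin, nsmul_eq_mul]
      ring
    have e2 : ∀ y, fk k (psi n x₀ t₀ r (y, t)) / (2 * (t₀ - t)) * (‖y - x₀‖^2 * D1 (y, t) (0, 1))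
       = ∑ i, fk k (psi n x₀ t₀ r (y, t)) * (inner ℝ (y - x₀) (EuclideanSpace.single i 1) / (2 * (t₀ - t)))
        * (inner ℝ (EuclideanSpace.single i (1:ℝ)) (y - x₀) * D1 (y, t) (0, 1)) := by
      intro y
      have := sum_single (y - x₀) (innerSL ℝ (y - x₀))
      simp only [innerSL_apply_apply, real_inner_self_eq_norm_sq] at this
      rw [← this, Finset.sum_mul, Finset.mul_sum]
      refine Finset.sum_congr rfl fun i _ => ?_
      rw [real_inner_comm (y - x₀)]
      ring
    simp only [e1, e2]
    rw [integral_finsetSum _ fun i _ => (e i).1, integral_finsetSum _ fun i _ => (e i).2.1]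
    exact Finset.sum_congr rfl fun i _ => (e i).2.2
  · simp [ind0_Er hn x₀ hr hrt _ _ t ht]

set_option maxHeartbeats 1600000 in
lemma hC {n : ℕ} (hn : 1 ≤ n) (x₀ : EuclideanSpace ℝ (Fin n)) {t₀ r : ℝ} (hr : 0 < r)
    (hrt : r^2 < 4 * π * t₀) (k : ℕ)
    (D1 : EuclideanSpace ℝ (Fin n) × ℝ → (EuclideanSpace ℝ (Fin n) × ℝ) →L[ℝ] ℝ)
    (D2 : EuclideanSpace ℝ (Fin n) × ℝ → (EuclideanSpace ℝ (Fin n) × ℝ) →L[ℝ]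
      (EuclideanSpace ℝ (Fin n) × ℝ) →L[ℝ] ℝ)
    (hD2 : ∀ p, 0 < p.2 → p.2 < t₀ → HasFDerivAt D1 (D2 p) p)
    (hc2 : ContinuousOn D2 (univ ×ˢ Ioo 0 t₀))
    (hsymm : ∀ p, 0 < p.2 → p.2 < t₀ → ∀ u v, D2 p u v = D2 p v u)
    (ib2 : IntegrableOn (fun p => Fk k (psi n x₀ t₀ r p) * D2 p (p.1 - x₀, 0) (0, 1)) (Er n x₀ t₀ r))
    (ic1 : IntegrableOn (fun p => fk k (psi n x₀ t₀ r p) * (‖p.1 - x₀‖^2 / (4 * (t₀ - p.2)^2)) * D1 p (p.1 - x₀, 0)) (Er n x₀ t₀ r))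
    (ia2 : IntegrableOn (fun p => fk k (psi n x₀ t₀ r p) / (2 * (t₀ - p.2)) * D1 p (p.1 - x₀, 0)) (Er n x₀ t₀ r)) :
    ∫ p in Er n x₀ t₀ r, Fk k (psi n x₀ t₀ r p) * D2 p (p.1 - x₀, 0) (0, 1)
      = ∫ p in Er n x₀ t₀ r, (fk k (psi n x₀ t₀ r p) * (‖p.1 - x₀‖^2 / (4 * (t₀ - p.2)^2)) * D1 p (p.1 - x₀, 0)
        - n * (fk k (psi n x₀ t₀ r p) / (2 * (t₀ - p.2)) * D1 p (p.1 - x₀, 0))) := by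
  classical
  have hSm : MeasurableSet (Er n x₀ t₀ r) := Er_meas n x₀ t₀ r
  refine eq_of_slice_y hSm ib2 (ic1.sub (ia2.const_mul _)) ?_
  have : Nonempty (Fin n) := ⟨⟨0, hn⟩⟩
  have hne : ∀ᵐ y : EuclideanSpace ℝ (Fin n), y ≠ x₀ := by
    exact measure_eq_zero_iff_ae_notMem.1 (measure_singleton (μ := volume) x₀)
  filter_upwards [hne] with y hy
  have e := ibp_time hn x₀ hr hrt hy k (fun t => D1 (y, t) (y - x₀, 0))
    (fun t => D2 (y, t) (0, 1) (y - x₀, 0)) (fun t ht => sD1t D1 D2 hD2 y t ht _)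
    (by
      have : ContinuousOn (fun t => D2 (y, t)) (Ioo 0 t₀) :=
        hc2.comp (by fun_prop) fun t ht => ⟨mem_univ _, ht⟩
      exact (this.clm_apply continuousOn_const).clm_apply continuousOn_const)
  have red : ∀ u v : ℝ → ℝ, ∀ U : EuclideanSpace ℝ (Fin n) × ℝ → ℝ,
      (∀ t ∈ Ioo 0 t₀, psi n x₀ t₀ r (y, t) ≤ 0 → U (y, t) = 0) →
      (∀ t ∈ Ioo 0 t₀, U (y, t) = u t) →
      ∫ t, (Er n x₀ t₀ r).indicator U (y, t) = ∫ t in Ioo 0 t₀, u t := by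
    intro u v U h1 h2
    rw [← integral_indicator measurableSet_Ioo]
    congr 1
    ext t
    by_cases ht : t ∈ Ioo 0 t₀
    · rw [indicator_of_mem ht, ind_Er x₀ U y t ht.2 (h1 t ht), h2 t ht]
    · rw [indicator_of_notMem ht, ind0_Er hn x₀ hr hrt _ _ t ht]
  rw [red (fun t => Fk k (psi n x₀ t₀ r (y, t)) * D2 (y, t) (0, 1) (y - x₀, 0)) 0 _
    (fun t ht h => by simp [Fk_zero k h]) (fun t ht => by rw [hsymm (y, t) ht.1 ht.2]), e,
    ← integral_neg]
  symm
  apply red _ 0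
  · intro t ht h; simp [fk_zero k h]
  · intro t ht
    simp only
    ring



set_option maxHeartbeats 1600000 in
lemma ident_k {n : ℕ} (hn : 1 ≤ n) (x₀ : EuclideanSpace ℝ (Fin n)) {t₀ r : ℝ} (hr : 0 < r)
    (hrt : r^2 < 4 * π * t₀) (k : ℕ)
    (D1 : EuclideanSpace ℝ (Fin n) × ℝ → (EuclideanSpace ℝ (Fin n) × ℝ) →L[ℝ] ℝ)
    (D2 : EuclideanSpace ℝ (Fin n) × ℝ → (EuclideanSpace ℝ (Fin n) × ℝ) →L[ℝ]
      (EuclideanSpace ℝ (Fin n) × ℝ) →L[ℝ] ℝ)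
    (hD2 : ∀ p, 0 < p.2 → p.2 < t₀ → HasFDerivAt D1 (D2 p) p)
    (hc2 : ContinuousOn D2 (univ ×ˢ Ioo 0 t₀))
    (hsymm : ∀ p, 0 < p.2 → p.2 < t₀ → ∀ u v, D2 p u v = D2 p v u)
    (M : ℝ) (hM1 : ∀ p ∈ Er n x₀ t₀ r, ‖D1 p‖ ≤ M) (hM2 : ∀ p ∈ Er n x₀ t₀ r, ‖D2 p‖ ≤ M) :
    ∫ p in Er n x₀ t₀ r, fk k (psi n x₀ t₀ r p) *
        ((‖p.1 - x₀‖^2 / (4 * (t₀ - p.2)^2)) * D1 p (p.1 - x₀, -2 * (t₀ - p.2)))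
      = n * ∫ p in Er n x₀ t₀ r, Fk k (psi n x₀ t₀ r p) *
        ((∑ i, D2 p (EuclideanSpace.single i 1, 0) (EuclideanSpace.single i 1, 0)) - D1 p (0, 1)) := by
  classical
  set S := Er n x₀ t₀ r with hS
  have hSm : MeasurableSet S := Er_meas n x₀ t₀ r
  have hSU : S ⊆ univ ×ˢ Ioo 0 t₀ := fun p hp => ⟨mem_univ _, Er_pos hn x₀ t₀ r hr hrt hp, hp.1⟩
  have hc1 : ContinuousOn D1 (univ ×ˢ Ioo 0 t₀) := fun p hp =>
    (hD2 p hp.2.1 hp.2.2).continuousAt.continuousWithinAt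
  have cD1 : ContinuousOn D1 S := hc1.mono hSU
  have cD2 : ContinuousOn D2 S := hc2.mono hSU
  have cψ : ContinuousOn (psi n x₀ t₀ r) S := (psi_contOn x₀ t₀ r).mono fun p hp => hp.1
  have cF : ContinuousOn (fun p => Fk k (psi n x₀ t₀ r p)) S := (Fk_cont k).comp_continuousOn cψ
  have cf : ContinuousOn (fun p => fk k (psi n x₀ t₀ r p)) S := (fk_cont k).comp_continuousOn cψ
  have tpos : ∀ p ∈ S, 0 < t₀ - p.2 := fun p hp => sub_pos.2 hp.1
  have c_u2 : ContinuousOn (fun p => fk k (psi n x₀ t₀ r p) / (2 * (t₀ - p.2))) S :=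
    cf.div (by fun_prop) fun p hp => by have := tpos p hp; positivity
  have c_u3 : ContinuousOn (fun p => fk k (psi n x₀ t₀ r p) * (‖p.1 - x₀‖^2 / (4 * (t₀ - p.2)^2))) S :=
    cf.mul (ContinuousOn.div (by fun_prop) (by fun_prop) fun p hp => by have := tpos p hp; positivity)
  set ρ := r * √(12 * n) with hρ
  have hρ0 : 0 ≤ ρ := by positivity
  have hw : ∀ p ∈ S, ‖p.1 - x₀‖ ≤ ρ := fun p hp => Er_norm hn x₀ t₀ r hr hp
  have Dm_split : ∀ p ∈ S, 0 ≤ ‖p.1 - x₀‖^2 / (t₀ - p.2)^2 ∧ 0 < 1 / (t₀ - p.2) ∧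
      0 ≤ psi n x₀ t₀ r p := fun p hp => by
    have := tpos p hp
    exact ⟨by positivity, by positivity, hp.2⟩
  have bu1 : ∀ p ∈ S, |Fk k (psi n x₀ t₀ r p)| ≤ Dm n x₀ t₀ r p := by
    intro p hp
    obtain ⟨h1, h2, h3⟩ := Dm_split p hp
    rw [abs_of_nonneg (Fk_nonneg _ _)]
    have := Fk_le k h3
    unfold Dm; linarith
  have bu2 : ∀ p ∈ S, |fk k (psi n x₀ t₀ r p) / (2 * (t₀ - p.2))| ≤ Dm n x₀ t₀ r p := by
    intro p hp
    obtain ⟨h1, h2, h3⟩ := Dm_split p hp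
    have h0 := tpos p hp
    rw [abs_of_nonneg (div_nonneg (fk_nonneg _ _) (by positivity))]
    have : fk k (psi n x₀ t₀ r p) / (2 * (t₀ - p.2)) ≤ 1 / (t₀ - p.2) := by
      apply div_le_div₀ (by norm_num) (fk_le _ _) h0 (by linarith)
    unfold Dm; linarith
  have bu3 : ∀ p ∈ S, |fk k (psi n x₀ t₀ r p) * (‖p.1 - x₀‖^2 / (4 * (t₀ - p.2)^2))|
      ≤ Dm n x₀ t₀ r p := by
    intro p hp
    obtain ⟨h1, h2, h3⟩ := Dm_split p hp
    have h0 := tpos p hp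
    rw [abs_of_nonneg (mul_nonneg (fk_nonneg _ _) (by positivity))]
    have : fk k (psi n x₀ t₀ r p) * (‖p.1 - x₀‖^2 / (4 * (t₀ - p.2)^2))
        ≤ 1 * (‖p.1 - x₀‖^2 / (t₀ - p.2)^2) := by
      gcongr
      · exact fk_le _ _
      · nlinarith [sq_nonneg (t₀ - p.2)]
    unfold Dm; linarith
  have n1 : ∀ w : EuclideanSpace ℝ (Fin n), ‖((w, 0) : EuclideanSpace ℝ (Fin n) × ℝ)‖ = ‖w‖ := by
    intro w; simp [Prod.norm_def]
  have n2 : ‖((0, 1) : EuclideanSpace ℝ (Fin n) × ℝ)‖ = 1 := by simp [Prod.norm_def]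
  have hM0 : ∀ p ∈ S, 0 ≤ M := fun p hp => (norm_nonneg _).trans (hM1 p hp)
  have bw : ∀ p ∈ S, |D1 p (p.1 - x₀, 0)| ≤ M * ρ := by
    intro p hp
    refine ((D1 p).le_opNorm _).trans ?_
    rw [n1]
    exact mul_le_mul (hM1 p hp) (hw p hp) (norm_nonneg _) (hM0 p hp)
  have bt : ∀ p ∈ S, |D1 p (0, 1)| ≤ M := by
    intro p hp
    refine ((D1 p).le_opNorm _).trans ?_
    rw [n2, mul_one]; exact hM1 p hp
  have bwt : ∀ p ∈ S, |D2 p (p.1 - x₀, 0) (0, 1)| ≤ M * ρ := by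
    intro p hp
    refine ((D2 p).le_opNorm₂ _ _).trans ?_
    rw [n1, n2, mul_one]
    exact mul_le_mul (hM2 p hp) (hw p hp) (norm_nonneg _) (hM0 p hp)
  have bL : ∀ p ∈ S, |∑ i, D2 p (EuclideanSpace.single i 1, 0) (EuclideanSpace.single i 1, 0)| ≤ n * M := by
    intro p hp
    refine (Finset.abs_sum_le_sum_abs _ _).trans ?_
    refine (Finset.sum_le_sum (g := fun _ => M) fun i _ => ?_).trans (by simp)
    refine ((D2 p).le_opNorm₂ _ _).trans ?_
    rw [n1]; simp [hM2 p hp]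
  have bww : ∀ p ∈ S, |‖p.1 - x₀‖^2 * D1 p (0, 1)| ≤ ρ^2 * M := by
    intro p hp
    rw [abs_mul, abs_of_nonneg (by positivity)]
    have := hw p hp
    exact mul_le_mul (by gcongr) (bt p hp) (abs_nonneg _) (by positivity)
  -- integrability
  have ia1 := int_mul hn x₀ hr (u := fun p => Fk k (psi n x₀ t₀ r p))
    (v := fun p => ∑ i, D2 p (EuclideanSpace.single i 1, 0) (EuclideanSpace.single i 1, 0))
    cF (continuousOn_finsetSum _ fun i _ => (cD2.clm_apply continuousOn_const).clm_apply continuousOn_const) _ bu1 bL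
  have ia2 := int_mul hn x₀ hr (u := fun p => fk k (psi n x₀ t₀ r p) / (2 * (t₀ - p.2)))
    (v := fun p => D1 p (p.1 - x₀, 0)) c_u2 (cD1.clm_apply (by fun_prop)) _ bu2 bw
  have ib1 := int_mul hn x₀ hr (u := fun p => Fk k (psi n x₀ t₀ r p))
    (v := fun p => D1 p (0, 1)) cF (cD1.clm_apply continuousOn_const) _ bu1 bt
  have ib2 := int_mul hn x₀ hr (u := fun p => Fk k (psi n x₀ t₀ r p))
    (v := fun p => D2 p (p.1 - x₀, 0) (0, 1)) cF ((cD2.clm_apply (by fun_prop)).clm_apply continuousOn_const) _ bu1 bwt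
  have ib3 := int_mul hn x₀ hr (u := fun p => fk k (psi n x₀ t₀ r p) / (2 * (t₀ - p.2)))
    (v := fun p => ‖p.1 - x₀‖^2 * D1 p (0, 1)) c_u2 (ContinuousOn.mul (by fun_prop) (cD1.clm_apply continuousOn_const)) _ bu2 bww
  have ic1 := int_mul hn x₀ hr
    (u := fun p => fk k (psi n x₀ t₀ r p) * (‖p.1 - x₀‖^2 / (4 * (t₀ - p.2)^2)))
    (v := fun p => D1 p (p.1 - x₀, 0)) c_u3 (cD1.clm_apply (by fun_prop)) _ bu3 bw
  rw [← hS] at ia1 ia2 ib1 ib2 ib3 ic1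
  have hA := hA hn x₀ hr hrt k D1 D2 hD2 hc2 ia1 ia2
  have hB := hB hn x₀ hr hrt k D1 D2 hD2 hc2 ib1 ib2 ib3
  have hC := hC hn x₀ hr hrt k D1 D2 hD2 hc2 hsymm ib2 ic1 ia2
  rw [integral_add (ib1.const_mul _) ib2, integral_const_mul] at hB
  rw [integral_sub ic1 (ia2.const_mul _), integral_const_mul] at hC
  have eL : ∫ p in S, fk k (psi n x₀ t₀ r p) *
        ((‖p.1 - x₀‖^2 / (4 * (t₀ - p.2)^2)) * D1 p (p.1 - x₀, -2 * (t₀ - p.2)))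
      = ∫ p in S, (fk k (psi n x₀ t₀ r p) * (‖p.1 - x₀‖^2 / (4 * (t₀ - p.2)^2)) * D1 p (p.1 - x₀, 0)
        - fk k (psi n x₀ t₀ r p) / (2 * (t₀ - p.2)) * (‖p.1 - x₀‖^2 * D1 p (0, 1))) := by
    refine setIntegral_congr_fun hSm fun p hp => ?_
    have h0 := tpos p hp
    have : ((p.1 - x₀, -2 * (t₀ - p.2)) : EuclideanSpace ℝ (Fin n) × ℝ)
        = (p.1 - x₀, 0) + (-2 * (t₀ - p.2)) • (0, 1) := by simp
    simp only [this, map_add, map_smul, smul_eq_mul]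
    field_simp
    ring
  have eR : ∫ p in S, Fk k (psi n x₀ t₀ r p) *
        ((∑ i, D2 p (EuclideanSpace.single i 1, 0) (EuclideanSpace.single i 1, 0)) - D1 p (0, 1))
      = (∫ p in S, Fk k (psi n x₀ t₀ r p) *
        ∑ i, D2 p (EuclideanSpace.single i 1, 0) (EuclideanSpace.single i 1, 0))
        - ∫ p in S, Fk k (psi n x₀ t₀ r p) * D1 p (0, 1) := by
    rw [← integral_sub ia1 ib1]
    simp only [mul_sub]
  rw [eL, eR, integral_sub ic1 ib3]
  linear_combination n * (-hA) + hB - hC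

end HB


namespace HB

set_option maxHeartbeats 1600000 in
lemma ident {n : ℕ} (hn : 1 ≤ n) (x₀ : EuclideanSpace ℝ (Fin n)) {t₀ r : ℝ} (hr : 0 < r)
    (hrt : r^2 < 4 * π * t₀)
    (D1 : EuclideanSpace ℝ (Fin n) × ℝ → (EuclideanSpace ℝ (Fin n) × ℝ) →L[ℝ] ℝ)
    (D2 : EuclideanSpace ℝ (Fin n) × ℝ → (EuclideanSpace ℝ (Fin n) × ℝ) →L[ℝ]
      (EuclideanSpace ℝ (Fin n) × ℝ) →L[ℝ] ℝ)
    (hD2 : ∀ p, 0 < p.2 → p.2 < t₀ → HasFDerivAt D1 (D2 p) p)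
    (hc2 : ContinuousOn D2 (univ ×ˢ Ioo 0 t₀))
    (hsymm : ∀ p, 0 < p.2 → p.2 < t₀ → ∀ u v, D2 p u v = D2 p v u)
    (M : ℝ) (hM1 : ∀ p ∈ Er n x₀ t₀ r, ‖D1 p‖ ≤ M) (hM2 : ∀ p ∈ Er n x₀ t₀ r, ‖D2 p‖ ≤ M) :
    ∫ p in Er n x₀ t₀ r,
        ((‖p.1 - x₀‖^2 / (4 * (t₀ - p.2)^2)) * D1 p (p.1 - x₀, -2 * (t₀ - p.2)))
      = n * ∫ p in Er n x₀ t₀ r, psi n x₀ t₀ r p *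
        ((∑ i, D2 p (EuclideanSpace.single i 1, 0) (EuclideanSpace.single i 1, 0)) - D1 p (0, 1)) := by
  have hk := fun k => ident_k hn x₀ hr hrt k D1 D2 hD2 hc2 hsymm M hM1 hM2
  have hSm : MeasurableSet (Er n x₀ t₀ r) := Er_meas n x₀ t₀ r
  have hSU : Er n x₀ t₀ r ⊆ univ ×ˢ Ioo 0 t₀ :=
    fun p hp => ⟨mem_univ _, Er_pos hn x₀ t₀ r hr hrt hp, hp.1⟩
  have cD1 : ContinuousOn D1 (Er n x₀ t₀ r) := fun p hp =>
    (hD2 p (hSU hp).2.1 (hSU hp).2.2).continuousAt.continuousWithinAt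
  have cD2 : ContinuousOn D2 (Er n x₀ t₀ r) := hc2.mono hSU
  have cψ : ContinuousOn (psi n x₀ t₀ r) (Er n x₀ t₀ r) :=
    (psi_contOn x₀ t₀ r).mono fun p hp => hp.1
  have tpos : ∀ p ∈ Er n x₀ t₀ r, 0 < t₀ - p.2 := fun p hp => sub_pos.2 hp.1
  have c1 : ContinuousOn (fun p => (‖p.1 - x₀‖^2 / (4 * (t₀ - p.2)^2))) (Er n x₀ t₀ r) :=
    ContinuousOn.div (by fun_prop) (by fun_prop) fun p hp => by have := tpos p hp; positivity
  have c2 : ContinuousOn (fun p => D1 p (p.1 - x₀, -2 * (t₀ - p.2))) (Er n x₀ t₀ r) :=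
    cD1.clm_apply (by fun_prop)
  have c3 : ContinuousOn (fun p => (∑ i, D2 p (EuclideanSpace.single i 1, 0) (EuclideanSpace.single i 1, 0)) - D1 p (0, 1))
      (Er n x₀ t₀ r) :=
    (continuousOn_finsetSum _ fun i _ => (cD2.clm_apply continuousOn_const).clm_apply
      continuousOn_const).sub (cD1.clm_apply continuousOn_const)
  have bDm : ∀ p ∈ Er n x₀ t₀ r, ‖p.1 - x₀‖^2 / (4 * (t₀ - p.2)^2) ≤ Dm n x₀ t₀ r p ∧
      psi n x₀ t₀ r p ≤ Dm n x₀ t₀ r p := by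
    intro p hp
    have h0 := tpos p hp
    have h1 : ‖p.1 - x₀‖^2 / (4 * (t₀ - p.2)^2) ≤ ‖p.1 - x₀‖^2 / (t₀ - p.2)^2 := by
      gcongr
      nlinarith [sq_nonneg (t₀ - p.2)]
    have h2 : 0 ≤ ‖p.1 - x₀‖^2 / (t₀ - p.2)^2 := by positivity
    have h3 : 0 < 1 / (t₀ - p.2) := by positivity
    have h4 := hp.2
    unfold Dm
    constructor <;> linarith
  have hM0 : ∀ p ∈ Er n x₀ t₀ r, 0 ≤ M := fun p hp => (norm_nonneg _).trans (hM1 p hp)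
  have b2 : ∀ p ∈ Er n x₀ t₀ r, |D1 p (p.1 - x₀, -2 * (t₀ - p.2))| ≤ M * (r * √(12 * n) + r^2) := by
    intro p hp
    refine ((D1 p).le_opNorm _).trans ?_
    refine mul_le_mul (hM1 p hp) ?_ (norm_nonneg _) (hM0 p hp)
    have h0 := tpos p hp
    have h1 := Er_norm hn x₀ t₀ r hr hp
    have h2 := Er_tau hn x₀ t₀ r hr hp
    have h3 := Real.pi_gt_three
    rw [Prod.norm_def]
    refine max_le (by simp only; nlinarith) ?_
    simp only [norm_mul, Real.norm_eq_abs, abs_of_pos h0]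
    have h5 : 0 ≤ r * √(12 * n) := by positivity
    rw [show |(-2:ℝ)| = 2 by norm_num]
    nlinarith
  have b3 : ∀ p ∈ Er n x₀ t₀ r, |(∑ i, D2 p (EuclideanSpace.single i 1, 0) (EuclideanSpace.single i 1, 0)) - D1 p (0, 1)|
      ≤ n * M + M := by
    intro p hp
    refine (abs_sub _ _).trans (add_le_add ?_ ?_)
    · refine (Finset.abs_sum_le_sum_abs _ _).trans ?_
      refine (Finset.sum_le_sum (g := fun _ => M) fun i _ => ?_).trans (by simp)
      refine ((D2 p).le_opNorm₂ _ _).trans ?_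
      simp [Prod.norm_def, hM2 p hp]
    · refine ((D1 p).le_opNorm _).trans ?_
      simp [Prod.norm_def, hM1 p hp]
  have T1 : Tendsto (fun k => ∫ p in Er n x₀ t₀ r, fk k (psi n x₀ t₀ r p) *
        ((‖p.1 - x₀‖^2 / (4 * (t₀ - p.2)^2)) * D1 p (p.1 - x₀, -2 * (t₀ - p.2)))) atTop
      (nhds (∫ p in Er n x₀ t₀ r,
        ((‖p.1 - x₀‖^2 / (4 * (t₀ - p.2)^2)) * D1 p (p.1 - x₀, -2 * (t₀ - p.2))))) := by
    refine tendsto_integral_of_dominated_convergence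
      (fun p => Dm n x₀ t₀ r p * (M * (r * √(12 * n) + r^2))) ?_
      ((Dm_int hn x₀ t₀ r hr).mul_const _) ?_ ?_
    · intro k
      exact (((fk_cont k).comp_continuousOn cψ).mul (c1.mul c2)).aestronglyMeasurable hSm
    · intro k
      rw [ae_restrict_iff' hSm]
      refine Eventually.of_forall fun p hp => ?_
      have h0 := tpos p hp
      have h1 : 0 ≤ ‖p.1 - x₀‖^2 / (4 * (t₀ - p.2)^2) := by positivity
      rw [norm_mul, Real.norm_of_nonneg (fk_nonneg _ _), norm_mul, Real.norm_of_nonneg h1]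
      refine (mul_le_of_le_one_left (by positivity) (fk_le _ _)).trans ?_
      exact mul_le_mul (bDm p hp).1 (b2 p hp) (norm_nonneg _) (h1.trans (bDm p hp).1)
    · rw [ae_restrict_iff' hSm]
      filter_upwards [Er_psi_null hn x₀ t₀ r] with p hp0 hp
      have := (fk_tendsto (hp0 hp)).mul_const
        ((‖p.1 - x₀‖^2 / (4 * (t₀ - p.2)^2)) * D1 p (p.1 - x₀, -2 * (t₀ - p.2)))
      rwa [one_mul] at this
  have T2 : Tendsto (fun k => ∫ p in Er n x₀ t₀ r, Fk k (psi n x₀ t₀ r p) *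
        ((∑ i, D2 p (EuclideanSpace.single i 1, 0) (EuclideanSpace.single i 1, 0)) - D1 p (0, 1))) atTop
      (nhds (∫ p in Er n x₀ t₀ r, psi n x₀ t₀ r p *
        ((∑ i, D2 p (EuclideanSpace.single i 1, 0) (EuclideanSpace.single i 1, 0)) - D1 p (0, 1)))) := by
    refine tendsto_integral_of_dominated_convergence
      (fun p => Dm n x₀ t₀ r p * (n * M + M)) ?_
      ((Dm_int hn x₀ t₀ r hr).mul_const _) ?_ ?_
    · intro k
      exact (((Fk_cont k).comp_continuousOn cψ).mul c3).aestronglyMeasurable hSm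
    · intro k
      rw [ae_restrict_iff' hSm]
      refine Eventually.of_forall fun p hp => ?_
      rw [norm_mul, Real.norm_of_nonneg (Fk_nonneg _ _)]
      exact mul_le_mul ((Fk_le k hp.2).trans (bDm p hp).2) (b3 p hp) (norm_nonneg _)
        ((hp.2).trans (bDm p hp).2)
    · rw [ae_restrict_iff' hSm]
      exact Eventually.of_forall fun p hp => (Fk_tendsto hp.2).mul_const _
  simp only [hk] at T1
  exact tendsto_nhds_unique T1 (T2.const_mul _)

end HB

namespace HB

set_option maxHeartbeats 1600000 in
lemma main_r {n : ℕ} (hn : 1 ≤ n) (x₀ : EuclideanSpace ℝ (Fin n)) {t₀ r₁ r₂ : ℝ} (hr₁ : 0 < r₁)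
    (h12 : r₁ ≤ r₂) (hrt : r₂^2 < 4 * π * t₀)
    (q : EuclideanSpace ℝ (Fin n) × ℝ → ℝ)
    (D1 : EuclideanSpace ℝ (Fin n) × ℝ → (EuclideanSpace ℝ (Fin n) × ℝ) →L[ℝ] ℝ)
    (D2 : EuclideanSpace ℝ (Fin n) × ℝ → (EuclideanSpace ℝ (Fin n) × ℝ) →L[ℝ]
      (EuclideanSpace ℝ (Fin n) × ℝ) →L[ℝ] ℝ)
    (hD1 : ∀ p, 0 < p.2 → p.2 < t₀ → HasFDerivAt q (D1 p) p)
    (hD2 : ∀ p, 0 < p.2 → p.2 < t₀ → HasFDerivAt D1 (D2 p) p)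
    (hc2 : ContinuousOn D2 (univ ×ˢ Ioo 0 t₀))
    (hsymm : ∀ p, 0 < p.2 → p.2 < t₀ → ∀ u v, D2 p u v = D2 p v u)
    (M : ℝ) (hM0 : ∀ r ∈ Icc r₁ r₂, ∀ p ∈ Er n x₀ t₀ r, |q p| ≤ M)
    (hM1 : ∀ r ∈ Icc r₁ r₂, ∀ p ∈ Er n x₀ t₀ r, ‖D1 p‖ ≤ M)
    (hM2 : ∀ r ∈ Icc r₁ r₂, ∀ p ∈ Er n x₀ t₀ r, ‖D2 p‖ ≤ M) :
    (∫ p in B n, ‖p.1‖^2 / (4 * p.2^2) * q (x₀ + r₂ • p.1, t₀ - r₂^2 * p.2))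
      - (∫ p in B n, ‖p.1‖^2 / (4 * p.2^2) * q (x₀ + r₁ • p.1, t₀ - r₁^2 * p.2))
      = ∫ r in r₁..r₂, (n / r^(n+1)) * ∫ p in Er n x₀ t₀ r, psi n x₀ t₀ r p *
        ((∑ i, D2 p (EuclideanSpace.single i 1, 0) (EuclideanSpace.single i 1, 0)) - D1 p (0, 1)) := by
  have hpos : ∀ r ∈ Icc r₁ r₂, 0 < r := fun r hr => hr₁.trans_le hr.1
  have hrt' : ∀ r ∈ Icc r₁ r₂, r^2 < 4 * π * t₀ := fun r hr => by
    have := hpos r hr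
    have := hr.2
    nlinarith
  have hU : ∀ r ∈ Icc r₁ r₂, ∀ p ∈ B n, 0 < t₀ - r^2 * p.2 ∧ t₀ - r^2 * p.2 < t₀ := fun r hr p hp =>
    ⟨Er_pos hn x₀ t₀ r (hpos r hr) (hrt' r hr) (A_mem x₀ t₀ r (hpos r hr) hp),
      (A_mem x₀ t₀ r (hpos r hr) hp).1⟩
  have hc1 : ContinuousOn D1 (univ ×ˢ Ioo 0 t₀) := fun p hp =>
    (hD2 p hp.2.1 hp.2.2).continuousAt.continuousWithinAt
  have hcq : ContinuousOn q (univ ×ˢ Ioo 0 t₀) := fun p hp =>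
    (hD1 p hp.2.1 hp.2.2).continuousAt.continuousWithinAt
  have hBm : MeasurableSet (B n) := B_meas n
  have hK0 : ∀ p ∈ B n, 0 ≤ ‖p.1‖^2 / (4 * p.2^2) := fun p hp => by positivity
  have hK : ∀ p ∈ B n, ‖p.1‖^2 / (4 * p.2^2) ≤ 3 * n * p.2 ^ (-(7/6):ℝ) := fun p hp => by
    have := B_dom hn hp
    have e : ‖p.1‖^2 / (4 * p.2^2) = (‖p.1‖^2 / p.2^2) / 4 := by
      rw [div_div]; ring
    rw [e]; linarith
  have cK : ContinuousOn (fun p : EuclideanSpace ℝ (Fin n) × ℝ => ‖p.1‖^2 / (4 * p.2^2)) (B n) :=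
    ContinuousOn.div (by fun_prop) (by fun_prop) fun p hp => by have := hp.1; positivity
  -- integrability of q-terms
  have iq : ∀ r ∈ Icc r₁ r₂, IntegrableOn
      (fun p => ‖p.1‖^2 / (4 * p.2^2) * q (x₀ + r • p.1, t₀ - r^2 * p.2)) (B n) := by
    intro r hr
    refine Integrable.mono' (((B_int hn).const_mul (3 * n)).mul_const M)
      ((cK.mul (hcq.comp (f := fun p : EuclideanSpace ℝ (Fin n) × ℝ =>
        ((x₀ + r • p.1, t₀ - r^2 * p.2) : EuclideanSpace ℝ (Fin n) × ℝ))
        (by fun_prop) fun p hp => ⟨mem_univ _, hU r hr p hp⟩)).aestronglyMeasurable hBm) ?_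
    rw [ae_restrict_iff' hBm]
    refine Eventually.of_forall fun p hp => ?_
    rw [norm_mul, Real.norm_of_nonneg (hK0 p hp)]
    exact mul_le_mul (hK p hp) (hM0 r hr _ (A_mem x₀ t₀ r (hpos r hr) hp)) (norm_nonneg _)
      ((hK0 p hp).trans (hK p hp))
  set G : ℝ → EuclideanSpace ℝ (Fin n) × ℝ → ℝ := fun r p =>
    ‖p.1‖^2 / (4 * p.2^2) * D1 (x₀ + r • p.1, t₀ - r^2 * p.2) (p.1, -2 * r * p.2) with hG
  have hda : ∀ r ∈ Icc r₁ r₂, ∀ p ∈ B n, HasDerivAt (fun r => q (x₀ + r • p.1, t₀ - r^2 * p.2))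
      (D1 (x₀ + r • p.1, t₀ - r^2 * p.2) (p.1, -2 * r * p.2)) r := by
    intro r hr p hp
    have h1 : HasDerivAt (fun r : ℝ => x₀ + r • p.1) p.1 r := by
      simpa using ((hasDerivAt_id r).smul_const p.1).const_add x₀
    have h2 : HasDerivAt (fun r : ℝ => t₀ - r^2 * p.2) (-2 * r * p.2) r := by
      have := (((hasDerivAt_id r).pow 2).mul_const p.2).const_sub t₀
      refine (this.congr_deriv ?_)
      simp
    exact (hD1 _ (hU r hr p hp).1 (hU r hr p hp).2).comp_hasDerivAt r (h1.prodMk h2)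
  have cG : ContinuousOn (fun x : ℝ × (EuclideanSpace ℝ (Fin n) × ℝ) => G x.1 x.2)
      (Icc r₁ r₂ ×ˢ B n) := by
    refine (cK.comp continuousOn_snd fun x hx => hx.2).mul
      (ContinuousOn.clm_apply (hc1.comp (f := fun x : ℝ × (EuclideanSpace ℝ (Fin n) × ℝ) =>
        ((x₀ + x.1 • x.2.1, t₀ - x.1^2 * x.2.2) : EuclideanSpace ℝ (Fin n) × ℝ))
        (by fun_prop) fun x hx => ⟨mem_univ _, hU x.1 hx.1 x.2 hx.2⟩) (by fun_prop))
  have bG : ∀ r ∈ Icc r₁ r₂, ∀ p ∈ B n, ‖G r p‖ ≤ 1 * (3 * n * p.2 ^ (-(7/6):ℝ) *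
      (M * (√(12 * n) + 2 * r₂))) := by
    intro r hr p hp
    have hm := hM1 r hr _ (A_mem x₀ t₀ r (hpos r hr) hp)
    have hr0 := hpos r hr
    have hp0 := hp.1
    rw [one_mul, hG]
    simp only
    rw [norm_mul, Real.norm_of_nonneg (hK0 p hp)]
    refine mul_le_mul (hK p hp) ?_ (norm_nonneg _) ((hK0 p hp).trans (hK p hp))
    refine (ContinuousLinearMap.le_opNorm _ _).trans ?_
    refine mul_le_mul hm ?_ (norm_nonneg _) ((norm_nonneg _).trans hm)
    have h1 : ‖p.1‖ ≤ √(12 * n) := Real.le_sqrt_of_sq_le (B_norm1 hn hp)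
    have h2 := B_s1 hn hp
    have h3 := hr.2
    have h4 : 0 ≤ √(12 * (n:ℝ)) := by positivity
    rw [Prod.norm_def]
    refine max_le (by simp only; nlinarith) ?_
    simp only [norm_mul, Real.norm_eq_abs, abs_of_pos hr0, abs_of_pos hp0]
    rw [show |(-2:ℝ)| = 2 by norm_num]
    nlinarith [mul_le_mul h3 h2 hp0.le (hr0.le.trans h3)]
  -- FTC
  have ftc : ∀ p ∈ B n, ∫ r in r₁..r₂, G r p = ‖p.1‖^2 / (4 * p.2^2) * q (x₀ + r₂ • p.1, t₀ - r₂^2 * p.2)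
      - ‖p.1‖^2 / (4 * p.2^2) * q (x₀ + r₁ • p.1, t₀ - r₁^2 * p.2) := by
    intro p hp
    refine intervalIntegral.integral_eq_sub_of_hasDerivAt
      (f := fun r => ‖p.1‖^2 / (4 * p.2^2) * q (x₀ + r • p.1, t₀ - r^2 * p.2)) ?_ ?_
    · intro r hr
      rw [uIcc_of_le h12] at hr
      exact (hda r hr p hp).const_mul _
    · apply ContinuousOn.intervalIntegrable
      rw [uIcc_of_le h12]
      exact cG.comp (f := fun r => (r, p)) (by fun_prop) fun r hr => ⟨hr, hp⟩
  rw [← integral_sub (iq r₂ ⟨h12, le_rfl⟩) (iq r₁ ⟨le_rfl, h12⟩),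
    ← setIntegral_congr_fun hBm ftc]
  simp only [intervalIntegral.integral_of_le h12]
  rw [integral_integral_swap]
  · refine setIntegral_congr_fun measurableSet_Ioc fun r hr => ?_
    have hr' : r ∈ Icc r₁ r₂ := Ioc_subset_Icc_self hr
    have hr0 := hpos r hr'
    have id := ident hn x₀ hr0 (hrt' r hr') D1 D2 hD2 hc2 hsymm M (hM1 r hr') (hM2 r hr')
    rw [CV x₀ t₀ r hr0] at id
    rw [div_mul_eq_mul_div, ← id, eq_div_iff (by positivity), mul_comm, pow_succ _ (n+1), mul_assoc]
    congr 1
    rw [← integral_const_mul]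
    refine setIntegral_congr_fun hBm fun p hp => ?_
    have hp0 := hp.1
    simp only [hG, sub_sub_cancel, add_sub_cancel_left, norm_smul, Real.norm_eq_abs, abs_of_pos hr0]
    have : ((r • p.1, -2 * (r^2 * p.2)) : EuclideanSpace ℝ (Fin n) × ℝ) = r • (p.1, -2 * r * p.2) := by
      simp only [Prod.smul_mk, smul_eq_mul]
      congr 1
      ring
    rw [this, map_smul, smul_eq_mul]
    field_simp
  · have h1 : Integrable (fun x : (EuclideanSpace ℝ (Fin n) × ℝ) × ℝ => (3 * n * x.1.2 ^ (-(7/6):ℝ) *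
      (M * (√(12 * n) + 2 * r₂))) * 1) (((volume : Measure (EuclideanSpace ℝ (Fin n) × ℝ)).restrict (B n)).prod
        ((volume : Measure ℝ).restrict (Ioc r₁ r₂))) :=
      Integrable.mul_prod (((B_int hn).const_mul (3 * n)).mul_const _)
        (integrable_const (1:ℝ))
    have h2 : MeasurableSet (B n ×ˢ Ioc r₁ r₂) := hBm.prod measurableSet_Ioc
    refine Integrable.mono' h1 ?_ ?_
    · rw [Measure.prod_restrict]
      refine ContinuousOn.aestronglyMeasurable ?_ h2
      exact cG.comp (f := fun x : (EuclideanSpace ℝ (Fin n) × ℝ) × ℝ => (x.2, x.1)) (by fun_prop)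
        fun x hx => ⟨Ioc_subset_Icc_self hx.2, hx.1⟩
    · rw [Measure.prod_restrict, ae_restrict_iff' h2]
      refine Eventually.of_forall fun x hx => ?_
      refine (bG x.2 (Ioc_subset_Icc_self hx.2) x.1 hx.1).trans ?_
      rw [one_mul, mul_one]

end HB

namespace HB

lemma log_hat {n : ℕ} (x₀ : EuclideanSpace ℝ (Fin n)) {t₀ r t : ℝ} (ht : t < t₀)
    (y : EuclideanSpace ℝ (Fin n)) :
    Real.log ((4 * π * (t₀ - t)) ^ (-(n : ℝ) / 2)
          * Real.exp (-‖x₀ - y‖ ^ 2 / (4 * (t₀ - t)))) + n * Real.log r = psi n x₀ t₀ r (y, t) := by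
  have h : 0 < t₀ - t := sub_pos.2 ht
  rw [Real.log_mul (by positivity) (by positivity), Real.log_rpow (by positivity), Real.log_exp,
    norm_sub_rev]
  unfold psi
  ring

lemma mem_hat {n : ℕ} (x₀ : EuclideanSpace ℝ (Fin n)) {t₀ r t : ℝ} (hr : 0 < r) (ht : t < t₀)
    (y : EuclideanSpace ℝ (Fin n)) :
    r ^ (-(n : ℝ)) ≤ ((4 * π * (t₀ - t)) ^ (-(n : ℝ) / 2)
          * Real.exp (-‖x₀ - y‖ ^ 2 / (4 * (t₀ - t)))) ↔ 0 ≤ psi n x₀ t₀ r (y, t) := by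
  have h : 0 < t₀ - t := sub_pos.2 ht
  rw [← log_hat x₀ ht y, ← Real.log_le_log_iff (by positivity) (by positivity),
    Real.log_rpow hr]
  constructor <;> intro h <;> linarith

lemma grad_norm {n : ℕ} (x₀ : EuclideanSpace ℝ (Fin n)) {t₀ r t : ℝ} (ht : t < t₀)
    (y : EuclideanSpace ℝ (Fin n)) :
    ‖gradient (fun z => psi n x₀ t₀ r (z, t)) y‖^2 = ‖y - x₀‖^2 / (4 * (t₀ - t)^2) := by
  have h : 0 < t₀ - t := sub_pos.2 ht
  unfold gradient
  rw [LinearIsometryEquiv.norm_map, (psi_fderiv x₀ ht y).fderiv, norm_smul, innerSL_apply_norm,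
    norm_neg, Real.norm_of_nonneg (by positivity)]
  field_simp
  ring

lemma lap_eq {n : ℕ} {t₀ : ℝ} (Q : EuclideanSpace ℝ (Fin n) → ℝ → ℝ)
    (D1 : EuclideanSpace ℝ (Fin n) × ℝ → (EuclideanSpace ℝ (Fin n) × ℝ) →L[ℝ] ℝ)
    (D2 : EuclideanSpace ℝ (Fin n) × ℝ → (EuclideanSpace ℝ (Fin n) × ℝ) →L[ℝ]
      (EuclideanSpace ℝ (Fin n) × ℝ) →L[ℝ] ℝ)
    (hD1 : ∀ p, 0 < p.2 → p.2 < t₀ →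
      HasFDerivAt (fun p : (EuclideanSpace ℝ (Fin n)) × ℝ => Q p.1 p.2) (D1 p) p)
    (hD2 : ∀ p, 0 < p.2 → p.2 < t₀ → HasFDerivAt D1 (D2 p) p)
    (y : EuclideanSpace ℝ (Fin n)) (t : ℝ) (ht : t ∈ Ioo 0 t₀) :
    deriv (fun s => Q y s) t - lap (fun z => Q z t) y =
      -((∑ i, D2 (y, t) (EuclideanSpace.single i 1, 0) (EuclideanSpace.single i 1, 0)) - D1 (y, t) (0, 1)) := by
  have h1 : deriv (fun s => Q y s) t = D1 (y, t) (0, 1) := by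
    have := (hD1 (y, t) ht.1 ht.2).comp t (hasFDerivAt_prodMk_right (𝕜 := ℝ) y t)
    exact this.hasDerivAt.deriv
  have h2 : ∀ i, pdv i (fun z => Q z t) = fun z => D1 (z, t) (EuclideanSpace.single i 1, 0) := by
    intro i
    ext z
    have h := (hD1 (z, t) ht.1 ht.2).comp z (hasFDerivAt_prodMk_left (𝕜 := ℝ) z t)
    have this : HasFDerivAt (fun z => Q z t) ((D1 (z, t)).comp (ContinuousLinearMap.inl ℝ _ ℝ)) z := h
    unfold pdv
    rw [this.fderiv]
    rfl
  have h3 : lap (fun z => Q z t) y =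
      ∑ i, D2 (y, t) (EuclideanSpace.single i 1, 0) (EuclideanSpace.single i 1, 0) := by
    unfold lap
    refine Finset.sum_congr rfl fun i _ => ?_
    rw [h2]
    unfold pdv
    rw [(sD1 D1 D2 hD2 y t ht _).fderiv]
    rfl
  rw [h1, h3]; ring

lemma data {n : ℕ} {t₀ : ℝ} (q : EuclideanSpace ℝ (Fin n) × ℝ → ℝ)
    (hQ : ContDiffOn ℝ (⊤ : ℕ∞) q (Set.univ ×ˢ Set.Ioc 0 t₀)) :
    ∃ (D1 : EuclideanSpace ℝ (Fin n) × ℝ → (EuclideanSpace ℝ (Fin n) × ℝ) →L[ℝ] ℝ)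
     (D2 : EuclideanSpace ℝ (Fin n) × ℝ → (EuclideanSpace ℝ (Fin n) × ℝ) →L[ℝ]
      (EuclideanSpace ℝ (Fin n) × ℝ) →L[ℝ] ℝ),
    (∀ p, 0 < p.2 → p.2 < t₀ → HasFDerivAt q (D1 p) p) ∧
    (∀ p, 0 < p.2 → p.2 < t₀ → HasFDerivAt D1 (D2 p) p) ∧
    (ContinuousOn D2 (univ ×ˢ Ioo 0 t₀)) ∧
    (∀ p, 0 < p.2 → p.2 < t₀ → ∀ u v, D2 p u v = D2 p v u) ∧
    ∀ K : Set (EuclideanSpace ℝ (Fin n) × ℝ), IsCompact K → K ⊆ univ ×ˢ Ioc 0 t₀ →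
      ∃ M, ∀ p ∈ K, p.2 < t₀ → |q p| ≤ M ∧ ‖D1 p‖ ≤ M ∧ ‖D2 p‖ ≤ M := by
  set S : Set (EuclideanSpace ℝ (Fin n) × ℝ) := univ ×ˢ Ioc 0 t₀ with hS
  have hSd : UniqueDiffOn ℝ S := uniqueDiffOn_univ.prod (uniqueDiffOn_Ioc 0 t₀)
  have hUo : IsOpen (univ ×ˢ Ioo 0 t₀ : Set (EuclideanSpace ℝ (Fin n) × ℝ)) :=
    isOpen_univ.prod isOpen_Ioo
  have hUS : (univ ×ˢ Ioo 0 t₀ : Set (EuclideanSpace ℝ (Fin n) × ℝ)) ⊆ S :=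
    prod_mono le_rfl Ioo_subset_Ioc_self
  have nS : ∀ p : EuclideanSpace ℝ (Fin n) × ℝ, 0 < p.2 → p.2 < t₀ → S ∈ nhds p := fun p h1 h2 =>
    mem_of_superset (hUo.mem_nhds ⟨mem_univ _, h1, h2⟩) hUS
  have f1 : ContDiffOn ℝ (⊤ : ℕ∞) (fderivWithin ℝ q S) S := hQ.fderivWithin hSd (by simp)
  have f2 : ContDiffOn ℝ (⊤ : ℕ∞) (fderivWithin ℝ (fderivWithin ℝ q S) S) S :=
    f1.fderivWithin hSd (by simp)
  refine ⟨fderivWithin ℝ q S, fderivWithin ℝ (fderivWithin ℝ q S) S, ?_, ?_, ?_, ?_, ?_⟩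
  · intro p h1 h2
    have := ((hQ.differentiableOn (by simp)) p ⟨mem_univ _, h1, h2.le⟩).hasFDerivWithinAt
    exact this.hasFDerivAt (nS p h1 h2)
  · intro p h1 h2
    have := ((f1.differentiableOn (by simp)) p ⟨mem_univ _, h1, h2.le⟩).hasFDerivWithinAt
    exact this.hasFDerivAt (nS p h1 h2)
  · exact f2.continuousOn.mono hUS
  · intro p h1 h2 u v
    have hc : ContDiffAt ℝ (⊤ : ℕ∞) q p := hQ.contDiffAt (nS p h1 h2)
    have hs := hc.isSymmSndFDerivAt (by
      rw [minSmoothness_of_isRCLikeNormedField]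
      exact WithTop.coe_le_coe.2 (le_top : (2:ℕ∞) ≤ ⊤))
    have e1 : fderivWithin ℝ q S =ᶠ[nhds p] fderiv ℝ q := by
      filter_upwards [hUo.mem_nhds (⟨mem_univ _, h1, h2⟩ : p ∈ (univ ×ˢ Ioo 0 t₀ : Set _))] with z hz
      exact fderivWithin_of_mem_nhds (nS z hz.2.1 hz.2.2)
    rw [fderivWithin_of_mem_nhds (nS p h1 h2), e1.fderiv_eq]
    exact hs.eq u v
  · intro K hK hKS
    obtain ⟨M0, h0⟩ := hK.exists_bound_of_continuousOn (hQ.continuousOn.mono hKS)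
    obtain ⟨M1, h1⟩ := hK.exists_bound_of_continuousOn (f1.continuousOn.mono hKS)
    obtain ⟨M2, h2⟩ := hK.exists_bound_of_continuousOn
      (E := (EuclideanSpace ℝ (Fin n) × ℝ) →L[ℝ] (EuclideanSpace ℝ (Fin n) × ℝ) →L[ℝ] ℝ)
      (f2.continuousOn.mono hKS)
    refine ⟨max M0 (max M1 M2), fun p hp _ => ⟨?_, ?_, ?_⟩⟩
    · exact (h0 p hp).trans (le_max_left _ _)
    · exact (h1 p hp).trans ((le_max_left _ _).trans (le_max_right _ _))
    · exact (h2 p hp).trans ((le_max_right _ _).trans (le_max_right _ _))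

end HB

theorem stmt13 (n : ℕ) (hn : 1 ≤ n) (x₀ : EuclideanSpace ℝ (Fin n)) (t₀ : ℝ)
    (ht₀ : 0 < t₀)
    (hatH : EuclideanSpace ℝ (Fin n) → ℝ → ℝ)
    (hhatH : ∀ y t, hatH y t
      = (4 * π * (t₀ - t)) ^ (-(n : ℝ) / 2)
          * Real.exp (-‖x₀ - y‖ ^ 2 / (4 * (t₀ - t))))
    (E : ℝ → Set ((EuclideanSpace ℝ (Fin n)) × ℝ))
    (hE : ∀ r, E r
      = {p | 0 < p.2 ∧ p.2 < t₀ ∧ (r : ℝ) ^ (-(n : ℝ)) ≤ hatH p.1 p.2})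
    (Q : EuclideanSpace ℝ (Fin n) → ℝ → ℝ)
    (hQ : ContDiffOn ℝ (⊤ : ℕ∞) (fun p : (EuclideanSpace ℝ (Fin n)) × ℝ => Q p.1 p.2)
      (Set.univ ×ˢ Set.Ioc 0 t₀))
    (I : ℝ → ℝ)
    (hI : ∀ r, I r = r ^ (-(n : ℝ)) * ∫ p in E r,
      ‖gradient (fun z => Real.log (hatH z p.2) + n * Real.log r) p.1‖ ^ 2
        * Q p.1 p.2) :
    ∀ r₁ r₂ : ℝ, 0 < r₁ → r₁ ≤ r₂ → r₂ ^ 2 < 4 * π * t₀ →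
      I r₂ - I r₁
        = -∫ r in r₁..r₂, (n / r ^ (n + 1)) * ∫ p in E r,
            (Real.log (hatH p.1 p.2) + n * Real.log r)
              * (deriv (fun s => Q p.1 s) p.2 - lap (fun z => Q z p.2) p.1) := by
  intro r₁ r₂ hr₁ h12 hrt
  have hpos : ∀ r ∈ Icc r₁ r₂, 0 < r := fun r hr => hr₁.trans_le hr.1
  have hrt' : ∀ r ∈ Icc r₁ r₂, r^2 < 4 * π * t₀ := fun r hr => by
    have := hpos r hr
    have := hr.2
    nlinarith
  have hEr : ∀ r ∈ Icc r₁ r₂, E r = HB.Er n x₀ t₀ r := by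
    intro r hr
    rw [hE]
    ext p
    constructor
    · rintro ⟨_, h2, h3⟩
      rw [hhatH] at h3
      exact ⟨h2, (HB.mem_hat x₀ (hpos r hr) h2 p.1).1 h3⟩
    · intro hp
      refine ⟨HB.Er_pos hn x₀ t₀ r (hpos r hr) (hrt' r hr) hp, hp.1, ?_⟩
      rw [hhatH]
      exact (HB.mem_hat x₀ (hpos r hr) hp.1 p.1).2 hp.2
  obtain ⟨D1, D2, hD1, hD2, hc2, hsymm, hb⟩ := HB.data _ hQ
  have hπ := Real.pi_pos
  have h4 : r₂^2 / (4 * π) < t₀ := by rw [div_lt_iff₀ (by positivity)]; linarith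
  obtain ⟨M, hM⟩ := hb (Metric.closedBall x₀ (r₂ * √(12 * n)) ×ˢ Icc (t₀ - r₂^2 / (4 * π)) t₀)
    ((isCompact_closedBall _ _).prod isCompact_Icc)
    (prod_mono (subset_univ _) fun t ht => ⟨by linarith [ht.1], ht.2⟩)
  have hM' : ∀ r ∈ Icc r₁ r₂, ∀ p ∈ HB.Er n x₀ t₀ r, |Q p.1 p.2| ≤ M ∧ ‖D1 p‖ ≤ M ∧ ‖D2 p‖ ≤ M := by
    intro r hr p hp
    have h0 := hpos r hr
    refine hM p ⟨?_, ?_, hp.1.le⟩ hp.1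
    · rw [Metric.mem_closedBall, dist_eq_norm]
      refine (HB.Er_norm hn x₀ t₀ r h0 hp).trans ?_
      have := hr.2
      gcongr
    · have h1 := HB.Er_tau hn x₀ t₀ r h0 hp
      have h2 : t₀ - p.2 ≤ r₂^2 / (4 * π) := by
        rw [le_div_iff₀ (by positivity)]
        nlinarith [hr.2]
      linarith
  have hIr : ∀ r ∈ Icc r₁ r₂, I r = ∫ p in HB.B n, ‖p.1‖^2 / (4 * p.2^2) *
      Q (x₀ + r • p.1) (t₀ - r^2 * p.2) := by
    intro r hr
    have h0 := hpos r hr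
    rw [hI, hEr r hr, setIntegral_congr_fun (g := fun p => ‖p.1 - x₀‖^2 / (4 * (t₀ - p.2)^2) * Q p.1 p.2)
      (HB.Er_meas n x₀ t₀ r), HB.CV x₀ t₀ r h0, Real.rpow_neg h0.le, Real.rpow_natCast, ← mul_assoc,
      pow_add, ← mul_assoc, inv_mul_cancel₀ (by positivity), one_mul, ← integral_const_mul]
    · refine setIntegral_congr_fun (HB.B_meas n) fun p hp => ?_
      have hp0 := hp.1
      simp only [sub_sub_cancel, add_sub_cancel_left, norm_smul, Real.norm_eq_abs, abs_of_pos h0]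
      field_simp
    · intro p hp
      have e : (fun z => Real.log (hatH z p.2) + n * Real.log r)
          = fun z => HB.psi n x₀ t₀ r (z, p.2) := by
        ext z
        rw [hhatH, HB.log_hat x₀ hp.1]
      simp only
      rw [e, HB.grad_norm x₀ hp.1]
  have key := HB.main_r hn x₀ hr₁ h12 hrt _ D1 D2 hD1 hD2 hc2 hsymm M
    (fun r hr p hp => (hM' r hr p hp).1) (fun r hr p hp => (hM' r hr p hp).2.1)
    (fun r hr p hp => (hM' r hr p hp).2.2)
  rw [hIr r₂ ⟨h12, le_rfl⟩, hIr r₁ ⟨le_rfl, h12⟩]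
  refine key.trans ?_
  rw [← intervalIntegral.integral_neg]
  refine intervalIntegral.integral_congr fun r hr => ?_
  rw [uIcc_of_le h12] at hr
  rw [hEr r hr, ← mul_neg, ← integral_neg]
  congr 1
  refine setIntegral_congr_fun (HB.Er_meas n x₀ t₀ r) fun p hp => ?_
  rw [HB.lap_eq Q D1 D2 hD1 hD2 p.1 p.2
    ⟨HB.Er_pos hn x₀ t₀ r (hpos r hr) (hrt' r hr) hp, hp.1⟩, hhatH, HB.log_hat x₀ hp.1]
  ring
end
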